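/- There exist positive numerical constants ρ_r′, ρ_s′, and c′ such that the following holds. Under the observation model with incoherence parameter ν, if r ≤ ρ_r′ · n2 · ν⁻¹ · (log n1)⁻² and m ≤ ρ_s′ · n1 · n2, then with probability at least 1 − c′·n1^{−10} over the random support Ω and the random signs, the following event occurs: for every δ ≥ 0 and every noise matrix Z0 with ‖Z0‖_F ≤ δ, every minimizer (L̂, Ŝ) of StablePCP_c(δ) with λ = 1/√n1 and data D = L0 + S0 + Z0 satisfies ‖(L̂, Ŝ) − (L0, S0)‖_F ≤ √(320·n1·n2 + 4) · δ. -/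

import Mathlib

open Matrix
open scoped BigOperators

/-- Frobenius norm of a real matrix. -/
noncomputable def frob {n1 n2 : ℕ} (A : Matrix (Fin n1) (Fin n2) ℝ) : ℝ :=
  Real.sqrt (∑ i, ∑ j, A i j ^ 2)

/-- Entrywise ℓ¹ norm. -/
noncomputable def l1norm {n1 n2 : ℕ} (A : Matrix (Fin n1) (Fin n2) ℝ) : ℝ :=
  ∑ i, ∑ j, |A i j|

/-- Trace inner product ⟨A,B⟩ = trace(AᵀB). -/
noncomputable def minner {n1 n2 : ℕ} (A B : Matrix (Fin n1) (Fin n2) ℝ) : ℝ :=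
  ∑ i, ∑ j, A i j * B i j

/-- Spectral norm (largest singular value), as the ℓ²→ℓ² operator norm. -/
noncomputable def spec {n1 n2 : ℕ} (A : Matrix (Fin n1) (Fin n2) ℝ) : ℝ :=
  sSup {c : ℝ | ∃ x : Fin n2 → ℝ, (∑ j, x j ^ 2) ≤ 1 ∧
    c = Real.sqrt (∑ i, (∑ j, A i j * x j) ^ 2)}

/-- Nuclear norm (sum of singular values), via duality with the spectral norm. -/
noncomputable def nuc {n1 n2 : ℕ} (A : Matrix (Fin n1) (Fin n2) ℝ) : ℝ :=
  sSup {c : ℝ | ∃ B : Matrix (Fin n1) (Fin n2) ℝ, spec B ≤ 1 ∧ c = minner A B}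

/-- P_Ω: the matrix agreeing with `M` on `Ω` and zero off `Ω`. -/
noncomputable def projS {n1 n2 : ℕ} (Ω : Finset (Fin n1 × Fin n2))
    (M : Matrix (Fin n1) (Fin n2) ℝ) : Matrix (Fin n1) (Fin n2) ℝ :=
  Matrix.of fun i j => if (i, j) ∈ Ω then M i j else 0

/-- Entrywise sign matrix. -/
noncomputable def signM {n1 n2 : ℕ} (A : Matrix (Fin n1) (Fin n2) ℝ) :
    Matrix (Fin n1) (Fin n2) ℝ :=
  Matrix.of fun i j => Real.sign (A i j)

/-- The tangent space T = {UQᵀ + RVᵀ}. -/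
def memT {n1 n2 r : ℕ} (U : Matrix (Fin n1) (Fin r) ℝ) (V : Matrix (Fin n2) (Fin r) ℝ)
    (M : Matrix (Fin n1) (Fin n2) ℝ) : Prop :=
  ∃ (Q : Matrix (Fin n2) (Fin r) ℝ) (R : Matrix (Fin n1) (Fin r) ℝ), M = U * Qᵀ + R * Vᵀ

/-- Membership in T⊥, the orthogonal complement of the tangent space. -/
def memTperp {n1 n2 r : ℕ} (U : Matrix (Fin n1) (Fin r) ℝ) (V : Matrix (Fin n2) (Fin r) ℝ)
    (W : Matrix (Fin n1) (Fin n2) ℝ) : Prop :=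
  ∀ M, memT U V M → minner W M = 0

/-- (L̂, Ŝ) is a global minimizer of the √PCP objective
`‖L‖_* + λ‖S‖₁ + μ‖L + S − D‖_F`. -/
def IsRootPCPMin {n1 n2 : ℕ} (D : Matrix (Fin n1) (Fin n2) ℝ) (lam mu : ℝ)
    (Lh Sh : Matrix (Fin n1) (Fin n2) ℝ) : Prop :=
  ∀ L S : Matrix (Fin n1) (Fin n2) ℝ,
    nuc Lh + lam * l1norm Sh + mu * frob (Lh + Sh - D) ≤
      nuc L + lam * l1norm S + mu * frob (L + S - D)

/-- (L̂, Ŝ) is a minimizer of StablePCP_c(δ):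
minimize `‖L‖_* + λ‖S‖₁` subject to `‖L + S − D‖_F ≤ δ`. -/
def IsStablePCPMin {n1 n2 : ℕ} (D : Matrix (Fin n1) (Fin n2) ℝ) (lam δ : ℝ)
    (Lh Sh : Matrix (Fin n1) (Fin n2) ℝ) : Prop :=
  frob (Lh + Sh - D) ≤ δ ∧
    ∀ L S : Matrix (Fin n1) (Fin n2) ℝ, frob (L + S - D) ≤ δ →
      nuc Lh + lam * l1norm Sh ≤ nuc L + lam * l1norm S

/-- Frobenius distance between pairs: ‖(L,S) − (L',S')‖_F. -/
noncomputable def pairDist {n1 n2 : ℕ} (L S L' S' : Matrix (Fin n1) (Fin n2) ℝ) : ℝ :=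
  Real.sqrt (frob (L - L') ^ 2 + frob (S - S') ^ 2)

/-- Sample space of the random sparsity model: a uniformly random support of
cardinality m together with iid uniform random signs. -/
abbrev SampleSpace (n1 n2 m : ℕ) : Type :=
  {Ω : Finset (Fin n1 × Fin n2) // Ω.card = m} × ((Fin n1 × Fin n2) → Bool)

/-- The sparse matrix S0 built from fixed magnitudes `a` and a random sample:
S0 vanishes off Ω and equals ±a on Ω according to the random signs. -/
noncomputable def sparseOf {n1 n2 m : ℕ} (a : Fin n1 × Fin n2 → ℝ) (ω : SampleSpace n1 n2 m) :
    Matrix (Fin n1) (Fin n2) ℝ :=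
  Matrix.of fun i j =>
    if (i, j) ∈ ω.1.1 then (if ω.2 (i, j) then a (i, j) else -a (i, j)) else 0

open Classical in
/-- Uniform probability of an event on a finite sample space. -/
noncomputable def unifProb {α : Type*} [Fintype α] (E : α → Prop) : ℝ :=
  ((Finset.univ.filter fun a => E a).card : ℝ) / (Fintype.card α : ℝ)

open MeasureTheory ProbabilityTheory
open Function (curry)
open WithLp (toLp)
open scoped NNReal Matrix.Norms.L2Operator Kronecker

/-!
Let `P_T` be the projection onto the tangent space `T` of the rank-`r` matrices at `L₀` and `P_Ω`
the projection onto the matrices supported on `Ω`. If `‖P_Ω P_T‖ ≤ 1 / 2` and some `W ∈ T⊥` makes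
`U * Vᵀ + W` almost a common subgradient of the nuclear norm at `L₀` and of `λ ‖·‖₁` at `S₀`, then
the optimality of `(L̂, Ŝ)` controls the part of the error along which `L` and `S` can be traded
against each other, and feasibility controls the rest. This happens for all `Z₀` and `δ`
simultaneously, so only the existence of `W` is a probabilistic matter.

For a Bernoulli support, `‖P_Ω P_T‖` is bounded through `𝔼 tr (P_T P_Ω P_T) ^ K`: `P_T P_Ω P_T` is a
sum of independent rank-one terms, and adding one of them shifts the spectrum by no more than the
coherence. `W` has two parts. The golfing part corrects `U * Vᵀ` off `Ω`: the complement of `Ω`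
contains `K` independent Bernoulli batches, and each batch halves the entries of the residual. The
sign part is `(1 - P_Ω P_T P_Ω)⁻¹` applied to the random signs, which is sub-Gaussian given `Ω`.
The estimate carries over to a uniform support of size `m` because `m` is the most likely size of a
Bernoulli support of density `m / (n1 * n2)`, hence has probability at least `1 / (n1 * n2 + 1)`.
-/

section FiberBound

variable {α β : Type*} [MeasurableSpace α] [MeasurableSpace β]

theorem measureReal_prod_le_of_fiber {μ : Measure α} {ν : Measure β} [IsProbabilityMeasure μ]
    [IsProbabilityMeasure ν] {S : Set (α × β)} (hS : MeasurableSet S) {B : Set α}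
    (hB : MeasurableSet B) {η : ℝ} (hη : 0 ≤ η)
    (h : ∀ a ∉ B, ν.real {b | (a, b) ∈ S} ≤ η) :
    (μ.prod ν).real S ≤ μ.real B + η := by
  have hfiber : ∀ a, ν {b | (a, b) ∈ S} ≤ B.indicator 1 a + ENNReal.ofReal η := fun a => by
    by_cases ha : a ∈ B
    · simpa [ha] using prob_le_one.trans le_self_add
    · simpa [ha, measureReal_def, ENNReal.le_ofReal_iff_toReal_le, hη] using h a ha
  have hle : (μ.prod ν) S ≤ μ B + ENNReal.ofReal η := by
    rw [Measure.prod_apply hS]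
    refine (lintegral_mono hfiber).trans_eq ?_
    rw [lintegral_add_right _ measurable_const, lintegral_indicator_one hB, lintegral_const,
      measure_univ, mul_one]
  refine (ENNReal.toReal_mono (by finiteness) hle).trans_eq ?_
  rw [ENNReal.toReal_add (by finiteness) (by finiteness), ENNReal.toReal_ofReal hη,
    measureReal_def]

end FiberBound

section BernoulliProduct

variable {ι : Type*} [Fintype ι]

/-- The law of a random subset of `ι` containing each point independently with probability `p`.
Subsets are encoded by their indicator functions with values in `Bool`. -/
noncomputable def bernoulliProduct (ι : Type*) [Fintype ι] (p : unitInterval) :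
    Measure (ι → Bool) :=
  Measure.pi fun _ => bernoulliMeasure true false p

instance (p : unitInterval) : IsProbabilityMeasure (bernoulliProduct ι p) := by
  unfold bernoulliProduct; infer_instance

theorem bernoulliProduct_real_singleton (p : unitInterval) (b : ι → Bool) :
    (bernoulliProduct ι p).real {b} = ∏ e, if b e then (p : ℝ) else 1 - p := by
  rw [bernoulliProduct, measureReal_def, Measure.pi_singleton, ENNReal.toReal_prod]
  refine Finset.prod_congr rfl fun e _ => ?_
  cases b e <;> simp

theorem iIndepFun_bernoulliProduct (p : unitInterval) :
    iIndepFun (fun (e : ι) (b : ι → Bool) => b e) (bernoulliProduct ι p) :=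
  iIndepFun_pi (X := fun _ x => x) fun _ => aemeasurable_id

theorem integral_bernoulliProduct_apply (p : unitInterval) (e : ι) (f : Bool → ℝ) :
    ∫ b, f (b e) ∂bernoulliProduct ι p = p * f true + (1 - p) * f false := by
  rw [bernoulliProduct, integral_comp_eval (μ := fun _ : ι => bernoulliMeasure true false p)
    (f := f) (by fun_prop)]
  simp [integral_bernoulliMeasure]

theorem map_bernoulliProduct_sdiff (p q : unitInterval) :
    ((bernoulliProduct ι q).prod (bernoulliProduct ι p)).map
      (fun x e => x.2 e && !x.1 e) = bernoulliProduct ι (p * unitInterval.symm q) := by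
  have hcoord : ((bernoulliMeasure true false q).prod (bernoulliMeasure true false p)).map
      (fun x => x.2 && !x.1) = bernoulliMeasure true false (p * unitInterval.symm q) := by
    have htrue : ((bernoulliMeasure true false q).prod (bernoulliMeasure true false p))
        ({false} ×ˢ {true}) = bernoulliMeasure true false (p * unitInterval.symm q) {true} := by
      rw [Measure.prod_prod, mul_comm]
      simp only [bernoulliMeasure_def]
      simp [← ENNReal.coe_mul]
      rfl
    refine Measure.ext_of_singleton fun b => ?_
    rw [Measure.map_apply (by fun_prop) (by simp)]
    cases b
    · have hpre : (fun x : Bool × Bool => x.2 && !x.1) ⁻¹' {false} = ({false} ×ˢ {true})ᶜ := by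
        ext ⟨x, y⟩; cases x <;> cases y <;> simp
      have hcompl : ({false} : Set Bool) = {true}ᶜ := by ext x; cases x <;> simp
      rw [hpre, prob_compl_eq_one_sub .of_discrete, htrue, hcompl,
        prob_compl_eq_one_sub .of_discrete]
    · have hpre : (fun x : Bool × Bool => x.2 && !x.1) ⁻¹' {true} = {false} ×ˢ {true} := by
        ext ⟨x, y⟩; cases x <;> cases y <;> simp
      rw [hpre, htrue]
  unfold bernoulliProduct
  rw [← hcoord, ← Measure.pi_map_pi (by fun_prop),
    ← (measurePreserving_arrowProdEquivProdArrow Bool Bool ι _ _).map_eq,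
    Measure.map_map (by fun_prop) (by fun_prop)]
  rfl

theorem integral_bernoulliProduct_update [DecidableEq ι] (p : unitInterval) (e : ι)
    (f : (ι → Bool) → ℝ) :
    ∫ b, (if b e then f (Function.update b e false) else 0) ∂bernoulliProduct ι p
      = p * ∫ b, f (Function.update b e false) ∂bernoulliProduct ι p := by
  have hind : IndepFun (fun b : ι → Bool => b e) (fun b => Function.update b e false)
      (bernoulliProduct ι p) := by
    refine (((iIndepFun_bernoulliProduct p).indepFun_finset {e} {e}ᶜ disjoint_compl_right
      fun _ => measurable_pi_apply _).comp
      (φ := fun x => x ⟨e, by simp⟩)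
      (ψ := fun x i => if hi : i = e then false else x ⟨i, by simpa using hi⟩)
      (measurable_of_finite _) (measurable_of_finite _)).congr ?_ ?_
    · exact .of_forall fun b => rfl
    · exact .of_forall fun b => funext fun i => by
        by_cases hi : i = e <;> simp [hi, Function.update]
  have hmul := hind.comp (φ := fun x => if x then (1 : ℝ) else 0) (ψ := f)
    (measurable_of_finite _) (measurable_of_finite _)
  have hmarginal : ∫ b : ι → Bool, (if b e then (1 : ℝ) else 0) ∂bernoulliProduct ι p = p := by
    simpa using integral_bernoulliProduct_apply p e fun x => if x then 1 else 0
  rw [← hmarginal]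
  refine (integral_congr_ae (.of_forall fun b => ?_)).trans
    (hmul.integral_mul_eq_mul_integral (by fun_prop) (by fun_prop))
  simp

end BernoulliProduct

section TailBounds

variable {Ω ι : Type*} {mΩ : MeasurableSpace Ω} {P : Measure Ω}

theorem mgf_le_exp_mul_integral_sq [IsProbabilityMeasure P] {X : Ω → ℝ} (hX : AEMeasurable X P)
    {s M : ℝ} (hM : ∀ ω, |X ω| ≤ M) (hmean : ∫ ω, X ω ∂P = 0) (hs : |s| * M ≤ 1) :
    mgf X P s ≤ Real.exp (s ^ 2 * ∫ ω, X ω ^ 2 ∂P) := by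
  have hint : Integrable X P := .of_bound hX.aestronglyMeasurable M (.of_forall hM)
  have hsq : Integrable (fun ω => X ω ^ 2) P :=
    .of_bound (hX.pow_const 2).aestronglyMeasurable (M ^ 2) <| .of_forall fun ω => by
      rw [Real.norm_eq_abs, abs_pow]
      exact pow_le_pow_left₀ (abs_nonneg _) (hM ω) 2
  have hexp (ω : Ω) : Real.exp (s * X ω) ≤ 1 + s * X ω + s ^ 2 * X ω ^ 2 := by
    have hle : |s * X ω| ≤ 1 := by
      rw [abs_mul]
      exact (mul_le_mul_of_nonneg_left (hM ω) (abs_nonneg s)).trans hs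
    linarith [(abs_le.mp (Real.abs_exp_sub_one_sub_id_le hle)).2, mul_pow s (X ω) 2]
  calc mgf X P s
    _ ≤ ∫ ω, (1 + s * X ω + s ^ 2 * X ω ^ 2) ∂P :=
        integral_mono_of_nonneg (.of_forall fun ω => (Real.exp_pos _).le)
          (((integrable_const 1).add (hint.const_mul s)).add (hsq.const_mul _)) (.of_forall hexp)
    _ = 1 + s ^ 2 * ∫ ω, X ω ^ 2 ∂P := by
        rw [integral_add (f := fun ω => 1 + s * X ω)
          ((integrable_const 1).add (hint.const_mul s)) (hsq.const_mul _),
          integral_add (integrable_const 1) (hint.const_mul s), integral_const_mul,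
          integral_const_mul, hmean]
        simp
    _ ≤ _ := by rw [add_comm]; exact Real.add_one_le_exp _

theorem measureReal_abs_sum_ge_le_of_iIndepFun [Fintype ι] {X : ι → Ω → ℝ} (hind : iIndepFun X P)
    (hX : ∀ i, AEMeasurable (X i) P) {s M V t : ℝ} (hM : ∀ i ω, |X i ω| ≤ M)
    (hmean : ∀ i, ∫ ω, X i ω ∂P = 0) (hV : ∑ i, ∫ ω, X i ω ^ 2 ∂P ≤ V) (hs : 0 ≤ s)
    (hsM : s * M ≤ 1) :
    P.real {ω | t ≤ |∑ i, X i ω|} ≤ 2 * Real.exp (s ^ 2 * V - s * t) := by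
  have := hind.isProbabilityMeasure
  have hupper {Y : ι → Ω → ℝ} (hind : iIndepFun Y P) (hY : ∀ i, AEMeasurable (Y i) P)
      (hM : ∀ i ω, |Y i ω| ≤ M) (hmean : ∀ i, ∫ ω, Y i ω ∂P = 0)
      (hV : ∑ i, ∫ ω, Y i ω ^ 2 ∂P ≤ V) :
      P.real {ω | t ≤ ∑ i, Y i ω} ≤ Real.exp (s ^ 2 * V - s * t) := by
    have hmgf : mgf (fun ω => ∑ i, Y i ω) P s ≤ Real.exp (s ^ 2 * V) := by
      have hsum := hind.mgf_sum₀ hY (t := s) Finset.univ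
      rw [show (∑ i, Y i) = fun ω => ∑ i, Y i ω by ext ω; simp] at hsum
      rw [hsum]
      refine (Finset.prod_le_prod (fun i _ => mgf_nonneg) fun i _ =>
        mgf_le_exp_mul_integral_sq (hY i) (hM i) (hmean i) (by rwa [abs_of_nonneg hs])).trans ?_
      rw [← Real.exp_sum, ← Finset.mul_sum]
      gcongr
    refine (measure_ge_le_exp_mul_mgf t hs ?_).trans ?_
    · have hbound (ω : Ω) : |∑ i, Y i ω| ≤ ∑ _i : ι, M :=
        (Finset.abs_sum_le_sum_abs _ _).trans (Finset.sum_le_sum fun i _ => hM i ω)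
      refine integrable_exp_mul_of_mem_Icc (a := -∑ _i : ι, M) (b := ∑ _i : ι, M)
        (Finset.aemeasurable_fun_sum _ fun i _ => hY i) (.of_forall fun ω => abs_le.mp (hbound ω))
    · rw [sub_eq_neg_add, Real.exp_add, ← neg_mul]
      gcongr
  have hlower := hupper (hind.comp (fun _ x => -x) fun _ => measurable_neg) (fun i => (hX i).neg)
    (by simpa using hM) (by simpa [integral_neg] using hmean) (by simpa using hV)
  have hcover : {ω | t ≤ |∑ i, X i ω|} ⊆ {ω | t ≤ ∑ i, X i ω} ∪ {ω | t ≤ ∑ i, -X i ω} := by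
    intro ω hω
    simpa [le_abs] using hω
  calc P.real {ω | t ≤ |∑ i, X i ω|}
    _ ≤ P.real {ω | t ≤ ∑ i, X i ω} + P.real {ω | t ≤ ∑ i, -X i ω} :=
        (measureReal_mono hcover).trans (measureReal_union_le _ _)
    _ ≤ _ := (add_le_add (hupper hind hX hM hmean hV) hlower).trans_eq (two_mul _).symm

/-- A random vector is sub-Gaussian with variance proxy `c` if all its one-dimensional projections
along vectors of the Euclidean unit ball are. -/
def IsSubgaussianVector [Fintype ι] (X : Ω → ι → ℝ) (c : ℝ≥0) (P : Measure Ω) : Prop :=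
  ∀ v : ι → ℝ, v ⬝ᵥ v ≤ 1 → HasSubgaussianMGF (fun ω => v ⬝ᵥ X ω) c P

theorem hasSubgaussianMGF_mono {X : Ω → ℝ} {c d : ℝ≥0} (h : HasSubgaussianMGF X c P)
    (hcd : c ≤ d) : HasSubgaussianMGF X d P where
  integrable_exp_mul := h.integrable_exp_mul
  mgf_le t := (h.mgf_le t).trans (by gcongr)

theorem measureReal_abs_ge_le [IsFiniteMeasure P] {X : Ω → ℝ} {c : ℝ≥0}
    (h : HasSubgaussianMGF X c P) {t : ℝ} (ht : 0 ≤ t) :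
    P.real {ω | t ≤ |X ω|} ≤ 2 * Real.exp (-t ^ 2 / (2 * c)) := by
  have hcover : {ω | t ≤ |X ω|} ⊆ {ω | t ≤ X ω} ∪ {ω | t ≤ (-X) ω} := fun ω hω => by
    simpa [le_abs] using hω
  exact (measureReal_mono hcover).trans <| (measureReal_union_le _ _).trans <|
    (add_le_add (h.measure_ge_le ht) (h.neg.measure_ge_le ht)).trans_eq (two_mul _).symm

namespace IsSubgaussianVector

variable [Fintype ι] {X : Ω → ι → ℝ} {c : ℝ≥0}

theorem of_iIndepFun (hX : iIndepFun (fun i ω => X ω i) P)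
    (h : ∀ i, HasSubgaussianMGF (fun ω => X ω i) c P) : IsSubgaussianVector X c P := by
  intro v hv
  have hind : iIndepFun (fun i ω => v i * X ω i) P :=
    hX.comp (fun i x => v i * x) fun i => measurable_const_mul (v i)
  refine hasSubgaussianMGF_mono
    (HasSubgaussianMGF.sum_of_iIndepFun hind (s := Finset.univ) fun i _ => (h i).const_mul (v i)) ?_
  have hle : ∑ i, v i ^ 2 ≤ 1 := by simpa [dotProduct, sq] using hv
  rw [← NNReal.coe_le_coe, NNReal.coe_sum]
  change ∑ i, v i ^ 2 * (c : ℝ) ≤ c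
  rw [← Finset.sum_mul]
  exact mul_le_of_le_one_left c.2 hle

theorem of_iIndepFun_of_abs_le (hX : iIndepFun (fun i ω => X ω i) P)
    (hmeas : ∀ i, AEMeasurable (fun ω => X ω i) P) (hmean : ∀ i, ∫ ω, X ω i ∂P = 0) {M : ℝ≥0}
    (hM : ∀ ω i, |X ω i| ≤ M) : IsSubgaussianVector X (M ^ 2) P := by
  have := hX.isProbabilityMeasure
  refine of_iIndepFun hX fun i => ?_
  have hoeffding := hasSubgaussianMGF_of_mem_Icc_of_integral_eq_zero (hmeas i)
    (.of_forall fun ω => abs_le.mp (hM ω i)) (hmean i)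
  have hwidth : ‖(M : ℝ) - -M‖₊ / 2 = M := by
    rw [sub_neg_eq_add, ← two_mul, nnnorm_mul, Real.nnnorm_ofNat, NNReal.nnnorm_eq]
    exact mul_div_cancel_left₀ M two_ne_zero
  rwa [hwidth] at hoeffding

theorem of_map {Ω' : Type*} {mΩ' : MeasurableSpace Ω'} {Q : Measure Ω'} {f : Ω' → Ω}
    (hf : AEMeasurable f Q) (h : IsSubgaussianVector X c (Q.map f)) :
    IsSubgaussianVector (X ∘ f) c Q :=
  fun v hv => HasSubgaussianMGF.of_map (X := fun ω => v ⬝ᵥ X ω) hf (h v hv)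

theorem hasSubgaussianMGF (h : IsSubgaussianVector X c P) {v : ι → ℝ} {s : ℝ≥0} (hs : s ≠ 0)
    (hv : v ⬝ᵥ v ≤ s ^ 2) : HasSubgaussianMGF (fun ω => v ⬝ᵥ X ω) (s ^ 2 * c) P := by
  have hs' : (s : ℝ) ≠ 0 := by exact_mod_cast hs
  have hunit : ((s : ℝ)⁻¹ • v) ⬝ᵥ ((s : ℝ)⁻¹ • v) ≤ 1 := by
    rw [smul_dotProduct, dotProduct_smul, smul_eq_mul, smul_eq_mul, ← mul_assoc, ← sq, inv_pow,
      inv_mul_le_iff₀ (by positivity), mul_one]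
    exact hv
  refine ((h _ hunit).const_mul s).congr (.of_forall fun ω => ?_)
  dsimp only
  rw [smul_dotProduct, smul_eq_mul, mul_inv_cancel_left₀ hs']

end IsSubgaussianVector

end TailBounds

section OperatorNorm

theorem norm_toLp_sq {ι : Type*} [Fintype ι] (x : ι → ℝ) : ‖WithLp.toLp 2 x‖ ^ 2 = x ⬝ᵥ x := by
  simp only [EuclideanSpace.norm_sq_eq, Real.norm_eq_abs, sq_abs, dotProduct, ← sq]

variable {m n : Type*} [Fintype m] [Fintype n] [DecidableEq n]

theorem dotProduct_mulVec_self_le (A : Matrix m n ℝ) (x : n → ℝ) :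
    (A *ᵥ x) ⬝ᵥ (A *ᵥ x) ≤ ‖A‖ ^ 2 * (x ⬝ᵥ x) := by
  rw [← norm_toLp_sq, ← norm_toLp_sq, ← mul_pow]
  exact pow_le_pow_left₀ (norm_nonneg _) (Matrix.l2_opNorm_mulVec A (WithLp.toLp 2 x)) 2

theorem l2_opNorm_le_of_forall {A : Matrix m n ℝ} {c : ℝ} (hc : 0 ≤ c)
    (h : ∀ x, (A *ᵥ x) ⬝ᵥ (A *ᵥ x) ≤ c ^ 2 * (x ⬝ᵥ x)) : ‖A‖ ≤ c := by
  rw [Matrix.l2_opNorm_def]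
  refine ContinuousLinearMap.opNorm_le_bound _ hc fun x => ?_
  have hsq := h x.ofLp
  rw [← norm_toLp_sq, ← norm_toLp_sq, ← mul_pow] at hsq
  exact (sq_le_sq₀ (norm_nonneg _) (by positivity)).mp hsq

theorem l2_opNorm_le_of_forall_dotProduct_le {A : Matrix m n ℝ} {c : ℝ} (hc : 0 ≤ c)
    (h : ∀ y x, y ⬝ᵥ y ≤ 1 → x ⬝ᵥ x ≤ 1 → y ⬝ᵥ A *ᵥ x ≤ c) : ‖A‖ ≤ c := by
  rw [Matrix.l2_opNorm_def]
  refine ContinuousLinearMap.opNorm_le_of_re_inner_le hc fun x y hx hy => ?_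
  have hx' := norm_toLp_sq x.ofLp
  have hy' := norm_toLp_sq y.ofLp
  rw [WithLp.toLp_ofLp, hx, one_pow] at hx'
  rw [WithLp.toLp_ofLp, hy, one_pow] at hy'
  simpa [EuclideanSpace.inner_eq_star_dotProduct] using h y.ofLp x.ofLp hy'.ge hx'.ge

theorem dotProduct_mulVec_le (A : Matrix m n ℝ) {y : m → ℝ} {x : n → ℝ} (hy : y ⬝ᵥ y ≤ 1)
    (hx : x ⬝ᵥ x ≤ 1) : y ⬝ᵥ A *ᵥ x ≤ ‖A‖ := by
  have hA := Matrix.l2_opNorm_mulVec A (WithLp.toLp 2 x)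
  rw [← norm_toLp_sq, sq_le_one_iff₀ (norm_nonneg _)] at hx hy
  have hinner := real_inner_le_norm (WithLp.toLp 2 (A *ᵥ x)) (WithLp.toLp 2 y)
  rw [EuclideanSpace.inner_toLp_toLp, star_trivial] at hinner
  calc y ⬝ᵥ A *ᵥ x
    _ ≤ ‖WithLp.toLp 2 (A *ᵥ x)‖ * ‖WithLp.toLp 2 y‖ := hinner
    _ ≤ ‖A‖ * 1 * 1 := mul_le_mul (hA.trans (by gcongr)) hy (norm_nonneg _) (by positivity)
    _ = ‖A‖ := by ring

end OperatorNorm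

section SpectralTail

/-- A finite family of vectors that norms the unit ball of `ι → ℝ` up to a factor two: the lattice
`ℤ^ι / √|ι|` in the Euclidean ball of radius two. -/
noncomputable def latticeNet (ι : Type*) [Fintype ι] [DecidableEq ι] : Finset (ι → ℝ) :=
  ((Fintype.piFinset fun _ : ι =>
      Finset.Icc (-(2 * Fintype.card ι : ℤ)) (2 * Fintype.card ι)).filter
    fun k => ∑ i, k i ^ 2 ≤ 4 * (Fintype.card ι : ℤ)).image fun k i => k i / √(Fintype.card ι)

variable {ι : Type*} [Fintype ι] [DecidableEq ι]

theorem mem_latticeNet_of_sum_sq_le {k : ι → ℤ} (hk : ∑ i, k i ^ 2 ≤ 4 * (Fintype.card ι : ℤ)) :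
    (fun i => k i / √(Fintype.card ι)) ∈ latticeNet ι := by
  refine Finset.mem_image_of_mem _
    (Finset.mem_filter.mpr ⟨Fintype.mem_piFinset.mpr fun i => ?_, hk⟩)
  have hi := (Finset.single_le_sum (fun i _ => sq_nonneg (k i)) (Finset.mem_univ i)).trans hk
  have hpos : (1 : ℤ) ≤ Fintype.card ι := by exact_mod_cast Fintype.card_pos_iff.mpr ⟨i⟩
  rw [Finset.mem_Icc]
  constructor <;> nlinarith

theorem dotProduct_self_le_of_mem_latticeNet {v : ι → ℝ} (hv : v ∈ latticeNet ι) : v ⬝ᵥ v ≤ 4 := by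
  obtain ⟨k, hk, rfl⟩ := Finset.mem_image.mp hv
  have hle : ∑ i, (k i : ℝ) ^ 2 ≤ 4 * Fintype.card ι := by
    exact_mod_cast (Finset.mem_filter.mp hk).2
  calc _ = (∑ i, (k i : ℝ) ^ 2) / Fintype.card ι := by
        simp only [dotProduct, div_mul_div_comm, Nat.cast_nonneg, Real.mul_self_sqrt,
          ← Finset.sum_div, sq]
    _ ≤ 4 := div_le_of_le_mul₀ (Nat.cast_nonneg _) (by norm_num) hle

theorem sum_Icc_inv_two_pow_natAbs (M : ℕ) :
    ∑ j ∈ Finset.Icc (-(M : ℤ)) M, (2⁻¹ : ℝ) ^ j.natAbs = 3 - 2 * 2⁻¹ ^ M := by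
  induction M with
  | zero => norm_num
  | succ M ih =>
    have hIcc : Finset.Icc (-((M + 1 : ℕ) : ℤ)) ((M + 1 : ℕ) : ℤ) =
        insert (-((M + 1 : ℕ) : ℤ)) (insert ((M + 1 : ℕ) : ℤ) (Finset.Icc (-(M : ℤ)) M)) := by
      ext j
      simp only [Finset.mem_Icc, Finset.mem_insert]
      omega
    rw [hIcc, Finset.sum_insert (by simp; omega), Finset.sum_insert (by simp), ih, Int.natAbs_neg,
      Int.natAbs_natCast]
    ring

theorem card_latticeNet_le : ((latticeNet ι).card : ℝ) ≤ 48 ^ Fintype.card ι := by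
  set N := Fintype.card ι
  set box := Fintype.piFinset fun _ : ι => Finset.Icc (-(2 * N : ℤ)) (2 * N)
  have hweight {k : ι → ℤ} (hk : ∑ i, k i ^ 2 ≤ 4 * (N : ℤ)) :
      1 ≤ 16 ^ N * ∏ i, (2⁻¹ : ℝ) ^ (k i).natAbs := by
    have hexp : ∑ i, (k i).natAbs ≤ 4 * N := by
      have : ∑ i, ((k i).natAbs : ℤ) ≤ 4 * N :=
        (Finset.sum_le_sum fun i _ => by simpa using Int.le_self_sq |k i|).trans hk
      exact_mod_cast this
    rw [Finset.prod_pow_eq_pow_sum, inv_pow, ← div_eq_mul_inv, one_le_div (by positivity),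
      show (16 : ℝ) = 2 ^ 4 by norm_num, ← pow_mul]
    exact pow_le_pow_right₀ (by norm_num) hexp
  calc ((latticeNet ι).card : ℝ)
    _ ≤ ((box.filter fun k => ∑ i, k i ^ 2 ≤ 4 * (N : ℤ)).card : ℝ) := by
        exact_mod_cast Finset.card_image_le
    _ = ∑ k ∈ box.filter fun k => ∑ i, k i ^ 2 ≤ 4 * (N : ℤ), (1 : ℝ) := by simp
    _ ≤ ∑ k ∈ box, 16 ^ N * ∏ i, (2⁻¹ : ℝ) ^ (k i).natAbs :=
        (Finset.sum_le_sum fun k hk => hweight (Finset.mem_filter.mp hk).2).trans <|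
          Finset.sum_le_sum_of_subset_of_nonneg (Finset.filter_subset _ _)
            fun _ _ _ => by positivity
    _ = 16 ^ N * (3 - 2 * 2⁻¹ ^ (2 * N)) ^ N := by
        rw [← Finset.mul_sum, ← Finset.prod_univ_sum
          (fun _ : ι => Finset.Icc (-(2 * N : ℤ)) (2 * N)) (fun _ j => (2⁻¹ : ℝ) ^ j.natAbs),
          Finset.prod_const, Finset.card_univ, ← sum_Icc_inv_two_pow_natAbs]
        push_cast
        rfl
    _ ≤ 16 ^ N * 3 ^ N := by
        have : (2 : ℝ)⁻¹ ^ (2 * N) ≤ 1 := pow_le_one₀ (by norm_num) (by norm_num)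
        gcongr
        · linarith
        · linarith [show (0 : ℝ) ≤ 2 * 2⁻¹ ^ (2 * N) by positivity]
    _ = 48 ^ N := by rw [← mul_pow]; norm_num

theorem card_latticeNet_le_exp {N : ℕ} (hN : Fintype.card ι ≤ N) :
    ((latticeNet ι).card : ℝ) ≤ Real.exp (4 * N) := by
  have hexp : (48 : ℝ) ≤ Real.exp 4 := by
    have := pow_le_pow_left₀ (by norm_num) Real.exp_one_gt_d9.le 4
    rw [← Real.exp_nat_mul] at this
    norm_num at this
    linarith
  calc ((latticeNet ι).card : ℝ) ≤ 48 ^ Fintype.card ι := card_latticeNet_le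
    _ ≤ 48 ^ N := pow_le_pow_right₀ (by norm_num) hN
    _ ≤ Real.exp 4 ^ N := by gcongr
    _ = Real.exp (4 * N) := by rw [← Real.exp_nat_mul, mul_comm]

/-- Rounding each coordinate in the direction of the sign of `c` can only increase `c ⬝ᵥ x`. -/
theorem exists_mem_latticeNet_dotProduct_le {x : ι → ℝ} (hx : x ⬝ᵥ x ≤ 1) (c : ι → ℝ) :
    ∃ v ∈ latticeNet ι, c ⬝ᵥ x ≤ c ⬝ᵥ v := by
  set N := Fintype.card ι
  let k (i : ι) : ℤ := if 0 ≤ c i then ⌊√N * x i⌋ + 1 else ⌊√N * x i⌋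
  have hfloor (i : ι) := Int.floor_le (√N * x i)
  have hfloor' (i : ι) := Int.lt_floor_add_one (√N * x i)
  have hksq (i : ι) : (k i : ℝ) ^ 2 ≤ 2 * N * (x i * x i) + 2 := by
    have hdist : |k i - √N * x i| ≤ 1 := by
      rw [abs_le]
      dsimp only [k]
      split_ifs <;> push_cast <;> constructor <;> linarith [hfloor i, hfloor' i]
    have hsqrt : (√N * x i) ^ 2 = N * (x i * x i) := by
      rw [mul_pow, Real.sq_sqrt (Nat.cast_nonneg _), sq]
    nlinarith [sq_nonneg (k i - 2 * (√N * x i)), sq_abs (k i - √N * x i),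
      abs_nonneg (k i - √N * x i)]
  refine ⟨_, mem_latticeNet_of_sum_sq_le (k := k) ?_, Finset.sum_le_sum fun i _ => ?_⟩
  · have hsum : ∑ i, (k i : ℝ) ^ 2 ≤ 2 * N * (x ⬝ᵥ x) + 2 * N := by
      refine (Finset.sum_le_sum fun i _ => hksq i).trans_eq ?_
      rw [Finset.sum_add_distrib, ← Finset.mul_sum, dotProduct]
      simp [N, mul_comm]
    have : ∑ i, (k i : ℝ) ^ 2 ≤ 4 * N := by nlinarith [Nat.cast_nonneg (α := ℝ) N]
    exact_mod_cast this
  · have hN : 0 < √(N : ℝ) := by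
      have : 0 < N := Fintype.card_pos_iff.mpr ⟨i⟩
      positivity
    dsimp only [k]
    split_ifs with hi
    · refine mul_le_mul_of_nonneg_left ((le_div_iff₀ hN).mpr ?_) hi
      push_cast
      linarith [hfloor' i]
    · refine mul_le_mul_of_nonpos_left ((div_le_iff₀ hN).mpr ?_) (not_le.mp hi).le
      linarith [hfloor i]

theorem l2_opNorm_le_of_forall_mem_latticeNet {m n : Type*} [Fintype m] [Fintype n] [DecidableEq m]
    [DecidableEq n] {A : Matrix m n ℝ} {c : ℝ} (hc : 0 ≤ c)
    (h : ∀ y ∈ latticeNet m, ∀ x ∈ latticeNet n, y ⬝ᵥ A *ᵥ x ≤ c) : ‖A‖ ≤ c := by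
  refine l2_opNorm_le_of_forall_dotProduct_le hc fun y x hy hx => ?_
  obtain ⟨v, hv, hyv⟩ := exists_mem_latticeNet_dotProduct_le hy (A *ᵥ x)
  obtain ⟨w, hw, hxw⟩ := exists_mem_latticeNet_dotProduct_le hx (v ᵥ* A)
  calc y ⬝ᵥ A *ᵥ x ≤ v ⬝ᵥ A *ᵥ x := by simpa only [dotProduct_comm] using hyv
    _ ≤ v ⬝ᵥ A *ᵥ w := by simpa only [dotProduct_mulVec] using hxw
    _ ≤ c := h v hv w hw

/-- The spectral norm of the matrix with entries `X (i, j)`. -/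
noncomputable def specNorm {m n : Type*} [Fintype m] [Fintype n] [DecidableEq n]
    (X : m × n → ℝ) : ℝ :=
  ‖Matrix.of (Function.curry X)‖

theorem specNorm_zero {m n : Type*} [Fintype m] [Fintype n] [DecidableEq n] :
    specNorm (0 : m × n → ℝ) = 0 :=
  norm_zero

theorem specNorm_add_le {m n : Type*} [Fintype m] [Fintype n] [DecidableEq n]
    (X Y : m × n → ℝ) : specNorm (X + Y) ≤ specNorm X + specNorm Y :=
  norm_add_le _ _

variable {Ω m n : Type*} {mΩ : MeasurableSpace Ω} {P : Measure Ω} [Fintype m] [Fintype n]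

theorem IsSubgaussianVector.hasSubgaussianMGF_dotProduct_mulVec {X : Ω → m × n → ℝ} {c : ℝ≥0}
    (h : IsSubgaussianVector X c P) {y : m → ℝ} {x : n → ℝ} {s t : ℝ≥0} (hs : s ≠ 0) (ht : t ≠ 0)
    (hy : y ⬝ᵥ y ≤ s ^ 2) (hx : x ⬝ᵥ x ≤ t ^ 2) :
    HasSubgaussianMGF (fun ω => y ⬝ᵥ Matrix.of (Function.curry (X ω)) *ᵥ x)
      ((s * t) ^ 2 * c) P := by
  refine (h.hasSubgaussianMGF (v := fun e => y e.1 * x e.2) (mul_ne_zero hs ht) ?_).congr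
    (.of_forall fun ω => ?_)
  · calc (fun e : m × n => y e.1 * x e.2) ⬝ᵥ (fun e => y e.1 * x e.2) = (y ⬝ᵥ y) * (x ⬝ᵥ x) := by
          simp only [dotProduct, Fintype.sum_prod_type, Finset.sum_mul_sum, mul_mul_mul_comm]
      _ ≤ s ^ 2 * t ^ 2 := mul_le_mul hy hx (Finset.sum_nonneg fun _ _ => mul_self_nonneg _)
          (by positivity)
      _ = _ := by push_cast; ring
  · simp only [dotProduct, mulVec, Fintype.sum_prod_type, Finset.mul_sum, of_apply,
      Function.curry_apply]
    exact Finset.sum_congr rfl fun i _ => Finset.sum_congr rfl fun j _ => by ring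

theorem IsSubgaussianVector.measureReal_le_dotProduct_mulVec_le [DecidableEq m] [DecidableEq n]
    [IsFiniteMeasure P] {X : Ω → m × n → ℝ} {c : ℝ≥0} (h : IsSubgaussianVector X c P)
    {τ : ℝ} (hτ : 0 < τ) (hcτ : 288 * c ≤ τ ^ 2) {y : m → ℝ} (hy : y ∈ latticeNet m) {x : n → ℝ}
    (hx : x ∈ latticeNet n) (N : ℕ) :
    P.real {ω | τ * √N ≤ y ⬝ᵥ Matrix.of (Function.curry (X ω)) *ᵥ x} ≤ Real.exp (-(9 * N)) := by
  let d : ℝ≥0 := ⟨τ ^ 2 / 18, by positivity⟩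
  have hproxy : (2 * 2) ^ 2 * c ≤ d := by
    rw [← NNReal.coe_le_coe]
    push_cast
    change (2 * 2) ^ 2 * (c : ℝ) ≤ τ ^ 2 / 18
    linarith
  refine ((hasSubgaussianMGF_mono (h.hasSubgaussianMGF_dotProduct_mulVec two_ne_zero two_ne_zero
    ((dotProduct_self_le_of_mem_latticeNet hy).trans_eq (by norm_num))
    ((dotProduct_self_le_of_mem_latticeNet hx).trans_eq (by norm_num))) hproxy).measure_ge_le
    (by positivity)).trans_eq (congrArg Real.exp ?_)
  change -(τ * √N) ^ 2 / (2 * (τ ^ 2 / 18)) = -(9 * N)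
  rw [mul_pow, Real.sq_sqrt (Nat.cast_nonneg _)]
  field

theorem IsSubgaussianVector.measureReal_lt_specNorm_le [DecidableEq n]
    [IsFiniteMeasure P] {X : Ω → m × n → ℝ} {c : ℝ≥0} (h : IsSubgaussianVector X c P)
    {τ : ℝ} (hτ : 0 < τ) (hcτ : 288 * c ≤ τ ^ 2)
    (hcard : Fintype.card n ≤ Fintype.card m) :
    P.real {ω | τ * √(Fintype.card m) < specNorm (X ω)} ≤ Real.exp (-Fintype.card m) := by
  classical
  set N := Fintype.card m
  let E (p : (m → ℝ) × (n → ℝ)) : Set Ω :=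
    {ω | τ * √N ≤ p.1 ⬝ᵥ Matrix.of (Function.curry (X ω)) *ᵥ p.2}
  have hcover : {ω | τ * √N < specNorm (X ω)} ⊆ ⋃ p ∈ latticeNet m ×ˢ latticeNet n, E p := by
    intro ω hω
    contrapose! hω
    refine not_lt.mpr (l2_opNorm_le_of_forall_mem_latticeNet (by positivity) fun y hy x hx => ?_)
    simp only [E, Set.mem_iUnion, not_exists, Set.mem_ofPred_eq, not_le] at hω
    exact (hω (y, x) (Finset.mk_mem_product hy hx)).le
  have htail : ∀ p ∈ latticeNet m ×ˢ latticeNet n, P.real (E p) ≤ Real.exp (-(9 * N)) :=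
    fun p hp => h.measureReal_le_dotProduct_mulVec_le hτ hcτ (Finset.mem_product.mp hp).1
      (Finset.mem_product.mp hp).2 N
  calc P.real {ω | τ * √N < specNorm (X ω)}
    _ ≤ ∑ p ∈ latticeNet m ×ˢ latticeNet n, P.real (E p) :=
        (measureReal_mono hcover (measure_ne_top _ _)).trans (measureReal_biUnion_finset_le _ _)
    _ ≤ (latticeNet m).card * (latticeNet n).card * Real.exp (-(9 * N)) := by
        refine (Finset.sum_le_card_nsmul _ _ _ htail).trans_eq ?_
        rw [Finset.card_product, nsmul_eq_mul, Nat.cast_mul]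
    _ ≤ Real.exp (4 * N) * Real.exp (4 * N) * Real.exp (-(9 * N)) := by
        gcongr
        · exact card_latticeNet_le_exp le_rfl
        · exact card_latticeNet_le_exp hcard
    _ = Real.exp (-N) := by
        rw [← Real.exp_add, ← Real.exp_add]
        ring_nf

end SpectralTail

section SpectralMoments

open Finset.HasAntidiagonal (antidiagonal)

theorem sum_mul_sum_le_sum_mul_sum_mul {ι : Type*} [Fintype ι] {w f g : ι → ℝ}
    (hw : ∀ l, 0 ≤ w l) (hfg : Monovary f g) :
    (∑ l, w l * f l) * (∑ l, w l * g l) ≤ (∑ l, w l) * ∑ l, w l * (f l * g l) := by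
  have hcross (l k : ι) : 0 ≤ w l * w k * ((f l - f k) * (g l - g k)) :=
    mul_nonneg (mul_nonneg (hw l) (hw k)) <| by
      simpa [mul_comm] using monovary_iff_forall_mul_nonneg.mp hfg k l
  have hdouble : ∑ l, ∑ k, w l * w k * ((f l - f k) * (g l - g k)) =
      2 * ((∑ l, w l) * ∑ l, w l * (f l * g l) - (∑ l, w l * f l) * ∑ l, w l * g l) := by
    have hterm (l k : ι) : w l * w k * ((f l - f k) * (g l - g k)) =
        (w l * (f l * g l)) * w k + w l * (w k * (f k * g k))
          - ((w l * f l) * (w k * g k) + (w l * g l) * (w k * f k)) := by ring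
    simp only [hterm, Finset.sum_sub_distrib, Finset.sum_add_distrib, ← Finset.sum_mul_sum]
    ring
  linarith [hdouble ▸ Finset.sum_nonneg fun l _ => Finset.sum_nonneg fun k _ => hcross l k]

theorem add_pow_succ_eq_sum_antidiagonal {R : Type*} [Semiring R] (x y : R) (j : ℕ) :
    (x + y) ^ (j + 1) =
      x ^ (j + 1) + ∑ p ∈ antidiagonal j, x ^ p.1 * y * (x + y) ^ p.2 := by
  induction j with
  | zero => simp
  | succ j ih =>
    rw [pow_succ', add_mul]
    nth_rw 1 [ih]
    rw [Finset.Nat.sum_antidiagonal_succ, mul_add, Finset.mul_sum]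
    simp only [pow_succ' x, pow_zero, one_mul, mul_assoc]
    abel

theorem add_pow_le_three_mul_pow_add {x μ : ℝ} (hx : 0 ≤ x) (hμ : 0 ≤ μ) {K j : ℕ} (hj : j ≤ K) :
    (x + μ) ^ j ≤ 3 * x ^ j + ((K + 1) * μ) ^ j := by
  rcases j.eq_zero_or_pos with rfl | hj0
  · norm_num
  have hK : (0 : ℝ) < K := by exact_mod_cast hj0.trans_le hj
  rcases le_total (K * μ) x with h | h
  · have hexp : (1 + 1 / (K : ℝ)) ^ j ≤ 3 := calc
      _ ≤ Real.exp (1 / K) ^ j := by gcongr; linarith [Real.add_one_le_exp (1 / (K : ℝ))]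
      _ = Real.exp (j * (1 / K)) := (Real.exp_nat_mul _ _).symm
      _ ≤ Real.exp 1 := by
        gcongr
        rw [mul_one_div, div_le_one hK]
        exact_mod_cast hj
      _ ≤ 3 := by linarith [Real.exp_one_lt_d9]
    have hle : x + μ ≤ (1 + 1 / K) * x := by
      have : μ ≤ 1 / K * x := by rwa [one_div, inv_mul_eq_div, le_div_iff₀ hK, mul_comm]
      linarith
    calc (x + μ) ^ j
      _ ≤ (1 + 1 / (K : ℝ)) ^ j * x ^ j := by rw [← mul_pow]; gcongr
      _ ≤ 3 * x ^ j := by gcongr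
      _ ≤ _ := le_add_of_nonneg_right (by positivity)
  · calc (x + μ) ^ j ≤ ((K + 1) * μ) ^ j := by gcongr; linarith
      _ ≤ _ := le_add_of_nonneg_left (by positivity)

theorem posSemidef_add_vecMulVec {ι : Type*} [Finite ι] {B : Matrix ι ι ℝ} (hB : B.PosSemidef)
    (u : ι → ℝ) : (B + vecMulVec u u).PosSemidef :=
  hB.add (by simpa using posSemidef_vecMulVec_self_star u)

variable {ι : Type*} [Fintype ι] [DecidableEq ι]

theorem conjStarAlgAut_diagonal_eigenvalues_pow {B : Matrix ι ι ℝ} (hB : B.IsHermitian) (a : ℕ) :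
    Unitary.conjStarAlgAut ℝ _ hB.eigenvectorUnitary (diagonal fun l => hB.eigenvalues l ^ a)
      = B ^ a := by
  conv_rhs => rw [hB.spectral_theorem, ← map_pow, diagonal_pow]
  rfl

theorem l2_opNorm_pow_le_trace_pow {B : Matrix ι ι ℝ} (hB : B.PosSemidef) {k : ℕ} (hk : k ≠ 0) :
    ‖B‖ ^ k ≤ (B ^ k).trace := by
  have hnonneg (l : ι) := hB.eigenvalues_nonneg l
  have htrace : (B ^ k).trace = ∑ l, hB.1.eigenvalues l ^ k := by
    rw [← conjStarAlgAut_diagonal_eigenvalues_pow hB.1, Unitary.conjStarAlgAut_apply,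
      trace_mul_cycle, Unitary.coe_star_mul_self, one_mul, trace_diagonal]
  have hnorm : ‖B‖ = ‖hB.1.eigenvalues‖ := by
    conv_lhs => rw [← pow_one B, ← conjStarAlgAut_diagonal_eigenvalues_pow hB.1,
      Unitary.conjStarAlgAut_apply, ← Unitary.coe_star, CStarRing.norm_mul_coe_unitary,
      CStarRing.norm_coe_unitary_mul, l2_opNorm_diagonal]
    simp
  rcases isEmpty_or_nonempty ι with hι | hι
  · simp [hnorm, hk, Subsingleton.elim hB.1.eigenvalues 0]
  obtain ⟨l, -, hl⟩ := Finset.exists_mem_eq_sup Finset.univ Finset.univ_nonempty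
    fun l => ‖hB.1.eigenvalues l‖₊
  rw [htrace, hnorm, Pi.norm_def, hl, coe_nnnorm, Real.norm_of_nonneg (hnonneg l)]
  exact Finset.single_le_sum (f := fun l => hB.1.eigenvalues l ^ k)
    (fun l _ => pow_nonneg (hnonneg l) k) (Finset.mem_univ l)

/-- The `j`-th moment of the spectral measure of `B` at the vector `u`. -/
noncomputable def spectralMoment (B : Matrix ι ι ℝ) (u : ι → ℝ) (j : ℕ) : ℝ :=
  u ⬝ᵥ B ^ j *ᵥ u

variable {B : Matrix ι ι ℝ} (u : ι → ℝ)

theorem spectralMoment_zero (B : Matrix ι ι ℝ) : spectralMoment B u 0 = u ⬝ᵥ u := by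
  simp [spectralMoment]

theorem spectralMoment_nonneg (hB : B.PosSemidef) (j : ℕ) : 0 ≤ spectralMoment B u j := by
  simpa [spectralMoment] using (hB.pow j).dotProduct_mulVec_nonneg u

theorem exists_spectralMoment_eq_sum (hB : B.PosSemidef) :
    ∃ w x : ι → ℝ, (∀ l, 0 ≤ w l) ∧ (∀ l, 0 ≤ x l) ∧
      ∀ j, spectralMoment B u j = ∑ l, w l * x l ^ j := by
  set Q := (hB.1.eigenvectorUnitary : Matrix ι ι ℝ)
  refine ⟨fun l => (Qᵀ *ᵥ u) l ^ 2, hB.1.eigenvalues, fun l => sq_nonneg _,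
    hB.eigenvalues_nonneg, fun j => ?_⟩
  rw [spectralMoment, ← conjStarAlgAut_diagonal_eigenvalues_pow hB.1,
    Unitary.conjStarAlgAut_apply, star_eq_conjTranspose, conjTranspose_eq_transpose_of_trivial,
    ← mulVec_mulVec, ← mulVec_mulVec, dotProduct_mulVec, ← mulVec_transpose]
  simp only [dotProduct, mulVec_diagonal]
  exact Finset.sum_congr rfl fun l _ => by ring

theorem spectralMoment_add_vecMulVec_succ (B : Matrix ι ι ℝ) (j : ℕ) :
    spectralMoment (B + vecMulVec u u) u (j + 1) = spectralMoment B u (j + 1) +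
      ∑ p ∈ antidiagonal j,
        spectralMoment B u p.1 * spectralMoment (B + vecMulVec u u) u p.2 := by
  simp only [spectralMoment]
  nth_rw 1 [add_pow_succ_eq_sum_antidiagonal]
  simp only [add_mulVec, sum_mulVec, dotProduct_add, dotProduct_sum, ← mulVec_mulVec,
    vecMulVec_mulVec, mulVec_smul, dotProduct_smul]
  simp

theorem spectralMoment_le_spectralMoment_add_vecMulVec (hB : B.PosSemidef) (j : ℕ) :
    spectralMoment B u j ≤ spectralMoment (B + vecMulVec u u) u j := by
  cases j with
  | zero => simp only [spectralMoment_zero, le_refl]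
  | succ j =>
    rw [spectralMoment_add_vecMulVec_succ]
    exact le_add_of_nonneg_right (Finset.sum_nonneg fun p _ => mul_nonneg
      (spectralMoment_nonneg u hB _) (spectralMoment_nonneg u (posSemidef_add_vecMulVec hB u) _))

/-- Seen from `u`, adding `vecMulVec u u` shifts the spectrum of `B` by at most `u ⬝ᵥ u`. -/
theorem spectralMoment_add_vecMulVec_le_sum {w x : ι → ℝ} {μ : ℝ} (hw : ∀ l, 0 ≤ w l)
    (hx : ∀ l, 0 ≤ x l) (hsum : ∀ j, spectralMoment B u j = ∑ l, w l * x l ^ j)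
    (hu : u ⬝ᵥ u ≤ μ) (j : ℕ) :
    spectralMoment (B + vecMulVec u u) u j ≤ ∑ l, w l * (x l + μ) ^ j := by
  have hμ : 0 ≤ μ := (dotProduct_self_star_nonneg u).trans hu
  have hmass : ∑ l, w l ≤ μ := by simpa [← spectralMoment_zero u B, hsum] using hu
  induction j using Nat.strong_induction_on with
  | _ j ih =>
    cases j with
    | zero => simp [spectralMoment_zero, ← spectralMoment_zero u B, hsum]
    | succ j =>
      have hterm (p : ℕ × ℕ) (hp : p ∈ antidiagonal j) :
          spectralMoment B u p.1 * spectralMoment (B + vecMulVec u u) u p.2 ≤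
            ∑ l, w l * (x l ^ p.1 * μ * (x l + μ) ^ p.2) := by
        have hmono : Monovary (fun l => x l ^ p.1) fun l => (x l + μ) ^ p.2 := fun l k hlk =>
          pow_le_pow_left₀ (hx l) (le_of_add_le_add_right
            (lt_of_pow_lt_pow_left₀ _ (add_nonneg (hx k) hμ) hlk).le) _
        calc _ ≤ (∑ l, w l * x l ^ p.1) * ∑ l, w l * (x l + μ) ^ p.2 := by
              rw [hsum]
              exact mul_le_mul_of_nonneg_left
                (ih p.2 (Nat.lt_succ_of_le (Finset.HasAntidiagonal.antidiagonal.snd_le hp)))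
                (Finset.sum_nonneg fun l _ => mul_nonneg (hw l) (pow_nonneg (hx l) _))
          _ ≤ (∑ l, w l) * ∑ l, w l * (x l ^ p.1 * (x l + μ) ^ p.2) :=
              sum_mul_sum_le_sum_mul_sum_mul hw hmono
          _ ≤ μ * ∑ l, w l * (x l ^ p.1 * (x l + μ) ^ p.2) := by
              refine mul_le_mul_of_nonneg_right hmass (Finset.sum_nonneg fun l _ => ?_)
              have := hw l
              have := hx l
              positivity
          _ = _ := by
              rw [Finset.mul_sum]
              exact Finset.sum_congr rfl fun l _ => by ring
      rw [spectralMoment_add_vecMulVec_succ, hsum]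
      refine (add_le_add_right (Finset.sum_le_sum hterm) _).trans_eq ?_
      rw [Finset.sum_comm, ← Finset.sum_add_distrib]
      refine Finset.sum_congr rfl fun l _ => ?_
      rw [add_pow_succ_eq_sum_antidiagonal, mul_add, Finset.mul_sum]

theorem spectralMoment_add_vecMulVec_le {μ : ℝ} (hB : B.PosSemidef) (hu : u ⬝ᵥ u ≤ μ)
    {K j : ℕ} (hj : j ≤ K) :
    spectralMoment (B + vecMulVec u u) u j ≤
      3 * spectralMoment B u j + ((K + 1) * μ) ^ j * (u ⬝ᵥ u) := by
  obtain ⟨w, x, hw, hx, hsum⟩ := exists_spectralMoment_eq_sum u hB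
  have hμ : 0 ≤ μ := (dotProduct_self_star_nonneg u).trans hu
  calc _ ≤ ∑ l, w l * (x l + μ) ^ j := spectralMoment_add_vecMulVec_le_sum u hw hx hsum hu j
    _ ≤ ∑ l, w l * (3 * x l ^ j + ((K + 1) * μ) ^ j) := Finset.sum_le_sum fun l _ =>
        mul_le_mul_of_nonneg_left (add_pow_le_three_mul_pow_add (hx l) hμ hj) (hw l)
    _ = _ := by
        rw [← spectralMoment_zero u B, hsum, hsum, Finset.mul_sum, Finset.mul_sum,
          ← Finset.sum_add_distrib]
        exact Finset.sum_congr rfl fun l _ => by ring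

end SpectralMoments

section Compression

/-- The coordinate projection onto the subset of `ι` with indicator function `b`. -/
noncomputable def mask {ι : Type*} [DecidableEq ι] (b : ι → Bool) : Matrix ι ι ℝ :=
  diagonal fun e => if b e then 1 else 0

variable {ι : Type*} [Fintype ι] {G : Matrix ι ι ℝ}

theorem transpose_eq_of_isStarProjection (hG : IsStarProjection G) : Gᵀ = G := by
  simpa [star_eq_conjTranspose] using hG.isSelfAdjoint.star_eq

theorem apply_comm_of_isStarProjection (hG : IsStarProjection G) (e f : ι) : G e f = G f e :=
  congrFun₂ (transpose_eq_of_isStarProjection hG).symm e f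

theorem dotProduct_mulVec_row_of_isStarProjection (hG : IsStarProjection G) (A : Matrix ι ι ℝ)
    (e : ι) : G e ⬝ᵥ A *ᵥ G e = (G * A * G) e e := by
  rw [dotProduct_mulVec]
  exact Finset.sum_congr rfl fun f _ => by
    rw [apply_comm_of_isStarProjection hG e f]
    rfl

theorem dotProduct_row_self_of_isStarProjection (hG : IsStarProjection G) (e : ι) :
    G e ⬝ᵥ G e = G e e := by
  classical
  simpa [hG.isIdempotentElem.eq] using dotProduct_mulVec_row_of_isStarProjection hG 1 e

theorem trace_le_card_of_isStarProjection (hG : IsStarProjection G) :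
    G.trace ≤ Fintype.card ι := by
  refine (Finset.sum_le_sum fun e _ => ?_).trans_eq (by simp : ∑ _e : ι, (1 : ℝ) = _)
  have hsq : G e e ^ 2 ≤ G e ⬝ᵥ G e := by
    rw [sq]
    exact Finset.single_le_sum (f := fun f => G e f * G e f) (fun f _ => mul_self_nonneg _)
      (Finset.mem_univ e)
  rw [dotProduct_row_self_of_isStarProjection hG] at hsq
  rw [diag_apply]
  nlinarith

variable [DecidableEq ι]

theorem isStarProjection_mask (b : ι → Bool) : IsStarProjection (mask b) where
  isIdempotentElem := by simp [IsIdempotentElem, mask, diagonal_mul_diagonal]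
  isSelfAdjoint := by simp [IsSelfAdjoint, mask, star_eq_conjTranspose]

theorem trace_mul_compression (hG : IsStarProjection G) (A : Matrix ι ι ℝ) (d : ι → ℝ) :
    (A * (G * diagonal d * G)).trace = ∑ e, d e * (G e ⬝ᵥ A *ᵥ G e) := by
  rw [← mul_assoc, trace_mul_comm, ← mul_assoc, ← mul_assoc, trace]
  simp [dotProduct_mulVec_row_of_isStarProjection hG, mul_diagonal, mul_comm]

theorem compression_eq_add_vecMulVec (hG : IsStarProjection G) {b : ι → Bool} {e : ι}
    (he : b e = true) :
    G * mask b * G = G * mask (Function.update b e false) * G + vecMulVec (G e) (G e) := by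
  have hmask : mask b = mask (Function.update b e false) + Matrix.single e e 1 := by
    rw [mask, mask, ← diagonal_single, diagonal_add]
    congr 1
    ext f
    rcases eq_or_ne f e with rfl | hf <;> simp [*]
  have hrow : G.col e = G.row e := funext fun f => apply_comm_of_isStarProjection hG f e
  rw [hmask, mul_add, add_mul, single_eq_single_vecMulVec_single, mul_vecMulVec, vecMulVec_mul,
    mulVec_single_one, single_one_vecMul, hrow]
  rfl

theorem posSemidef_compression (hG : IsStarProjection G) (b : ι → Bool) :
    (G * mask b * G).PosSemidef := by
  have h := posSemidef_conjTranspose_mul_self (mask b * G)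
  rwa [conjTranspose_mul, ← star_eq_conjTranspose, ← star_eq_conjTranspose,
    hG.isSelfAdjoint.star_eq, (isStarProjection_mask b).isSelfAdjoint.star_eq, mul_assoc,
    ← mul_assoc (mask b), (isStarProjection_mask b).isIdempotentElem.eq, ← mul_assoc] at h

theorem l2_opNorm_mask_mul_sq (hG : IsStarProjection G) (b : ι → Bool) :
    ‖mask b * G‖ ^ 2 = ‖G * mask b * G‖ := by
  rw [sq, ← CStarRing.norm_star_mul_self, star_mul, hG.isSelfAdjoint.star_eq,
    (isStarProjection_mask b).isSelfAdjoint.star_eq, mul_assoc, ← mul_assoc (mask b),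
    (isStarProjection_mask b).isIdempotentElem.eq, ← mul_assoc]

theorem trace_compression_pow_mul (hG : IsStarProjection G) (b : ι → Bool) (k : ℕ) :
    ((G * mask b * G) ^ k * G).trace = ∑ e, spectralMoment (G * mask b * G) (G e) k := by
  simpa [spectralMoment, hG.isIdempotentElem.eq] using
    trace_mul_compression hG ((G * mask b * G) ^ k) fun _ => 1

theorem trace_compression_pow_succ_mul (hG : IsStarProjection G) (b : ι → Bool) (k : ℕ) :
    ((G * mask b * G) ^ (k + 1) * G).trace =
      ∑ e, if b e then spectralMoment (G * mask b * G) (G e) k else 0 := by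
  rw [pow_succ, mul_assoc, mul_assoc _ G G, hG.isIdempotentElem.eq, mask, trace_mul_compression hG]
  exact Finset.sum_congr rfl fun e _ => by split_ifs <;> simp [spectralMoment]

variable {μ : ℝ} {K k : ℕ} (hG : IsStarProjection G) (hμ : ∀ e, G e e ≤ μ)
include hG

theorem spectralMoment_compression_update_le (b : ι → Bool) (e : ι) :
    spectralMoment (G * mask (Function.update b e false) * G) (G e) k ≤
      spectralMoment (G * mask b * G) (G e) k := by
  cases he : b e with
  | true =>
    rw [compression_eq_add_vecMulVec hG he]
    exact spectralMoment_le_spectralMoment_add_vecMulVec _ (posSemidef_compression hG _) _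
  | false => rw [Function.update_eq_self_iff.mpr he.symm]

include hμ

theorem spectralMoment_compression_le {b : ι → Bool} {e : ι} (he : b e = true) (hk : k ≤ K) :
    spectralMoment (G * mask b * G) (G e) k ≤
      3 * spectralMoment (G * mask (Function.update b e false) * G) (G e) k
        + ((K + 1) * μ) ^ k * G e e := by
  have hu : G e ⬝ᵥ G e ≤ μ := (dotProduct_row_self_of_isStarProjection hG e).trans_le (hμ e)
  rw [compression_eq_add_vecMulVec hG he]
  simpa only [dotProduct_row_self_of_isStarProjection hG] using
    spectralMoment_add_vecMulVec_le _ (posSemidef_compression hG _) hu hk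

theorem integral_trace_compression_pow_succ_le (p : unitInterval) (hk : k ≤ K) :
    ∫ b, ((G * mask b * G) ^ (k + 1) * G).trace ∂bernoulliProduct ι p ≤
      p * (3 * ∫ b, ((G * mask b * G) ^ k * G).trace ∂bernoulliProduct ι p
        + ((K + 1) * μ) ^ k * G.trace) := by
  set θ := (K + 1) * μ
  let g (e : ι) (b : ι → Bool) : ℝ := 3 * spectralMoment (G * mask b * G) (G e) k + θ ^ k * G e e
  have hpoint (b : ι → Bool) : ((G * mask b * G) ^ (k + 1) * G).trace ≤
      ∑ e, if b e then g e (Function.update b e false) else 0 := by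
    rw [trace_compression_pow_succ_mul hG]
    refine Finset.sum_le_sum fun e _ => ?_
    split_ifs with he
    · exact spectralMoment_compression_le hG hμ he hk
    · exact le_rfl
  calc _ ≤ ∫ b, ∑ e, (if b e then g e (Function.update b e false) else 0)
        ∂bernoulliProduct ι p := integral_mono .of_finite .of_finite hpoint
    _ = ∑ e, p * ∫ b, g e (Function.update b e false) ∂bernoulliProduct ι p := by
        rw [integral_finsetSum _ fun _ _ => .of_finite]
        simp only [integral_bernoulliProduct_update]
    _ ≤ ∑ e, p * ∫ b, g e b ∂bernoulliProduct ι p := by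
        refine Finset.sum_le_sum fun e _ => mul_le_mul_of_nonneg_left
          (integral_mono .of_finite .of_finite fun b => ?_) p.2.1
        have := spectralMoment_compression_update_le hG b e (k := k)
        dsimp only [g]
        gcongr
    _ = _ := by
        rw [← Finset.mul_sum, ← integral_finsetSum _ fun _ _ => .of_finite]
        simp only [g, Finset.sum_add_distrib, ← Finset.mul_sum, ← trace_compression_pow_mul hG]
        rw [integral_add .of_finite .of_finite, integral_const_mul, integral_const]
        simp [trace]

theorem integral_trace_compression_pow_le (hμ0 : 0 ≤ μ) (p : unitInterval) (hk : k ≤ K) :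
    ∫ b, ((G * mask b * G) ^ k * G).trace ∂bernoulliProduct ι p ≤
      (4 * p + (K + 1) * μ) ^ k * Fintype.card ι := by
  have htrace := trace_le_card_of_isStarProjection hG
  have htrace0 : 0 ≤ G.trace := Finset.sum_nonneg fun e _ =>
    (dotProduct_self_star_nonneg (G e)).trans_eq (dotProduct_row_self_of_isStarProjection hG e)
  have hp := p.2.1
  induction k with
  | zero => simpa using htrace
  | succ k ih =>
    set s := 4 * (p : ℝ) + (K + 1) * μ
    have hs : 0 ≤ s := by positivity
    have hθ : (K + 1) * μ ≤ s := le_add_of_nonneg_left (by positivity)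
    calc _ ≤ p * (3 * (s ^ k * Fintype.card ι) + s ^ k * Fintype.card ι) := by
          refine (integral_trace_compression_pow_succ_le (K := K) hG hμ p
            (Nat.le_of_succ_le hk)).trans ?_
          gcongr
          exact ih (by omega)
      _ = 4 * p * (s ^ k * Fintype.card ι) := by ring
      _ ≤ s * (s ^ k * Fintype.card ι) := by
          gcongr
          exact le_add_of_nonneg_right (by positivity)
      _ = _ := by ring

theorem measureReal_lt_l2_opNorm_mask_mul_le (hμ0 : 0 ≤ μ) (p : unitInterval) (hK : K ≠ 0) {c : ℝ}
    (hc : 0 < c) :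
    (bernoulliProduct ι p).real {b | c < ‖mask b * G‖} ≤
      ((4 * p + (K + 1) * μ) / c ^ 2) ^ K * Fintype.card ι := by
  have hpow (b : ι → Bool) : (G * mask b * G) ^ K * G = (G * mask b * G) ^ K := by
    obtain ⟨k, rfl⟩ := Nat.exists_eq_succ_of_ne_zero hK
    rw [pow_succ, mul_assoc, mul_assoc _ G G, hG.isIdempotentElem.eq]
  have hsub : {b | c < ‖mask b * G‖} ⊆ {b | (c ^ 2) ^ K ≤ ((G * mask b * G) ^ K * G).trace} := by
    intro b (hb : c < _)
    rw [Set.mem_ofPred_eq, hpow]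
    refine le_trans ?_ (l2_opNorm_pow_le_trace_pow (posSemidef_compression hG b) hK)
    rw [← l2_opNorm_mask_mul_sq hG]
    gcongr
  have hnonneg (b : ι → Bool) : 0 ≤ ((G * mask b * G) ^ K * G).trace := by
    rw [hpow]
    exact ((posSemidef_compression hG b).pow K).trace_nonneg
  have hmarkov := (mul_meas_ge_le_integral_of_nonneg (.of_forall hnonneg) .of_finite
    ((c ^ 2) ^ K)).trans (integral_trace_compression_pow_le hG hμ hμ0 p le_rfl)
  rw [div_pow, div_mul_eq_mul_div, le_div_iff₀' (by positivity)]
  exact (mul_le_mul_of_nonneg_left (measureReal_mono hsub) (by positivity)).trans hmarkov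

end Compression

section Sampling

variable {ι : Type*}

/-- The unbiased estimator of `Z` from its entries on a random set `b` of density `q`. -/
noncomputable def sampleVec (q : ℝ) (b : ι → Bool) (Z : ι → ℝ) (e : ι) : ℝ :=
  if b e then Z e / q else 0

variable {q : unitInterval} {Z : ι → ℝ} {z : ℝ}

theorem abs_sampleVec_le (hZ : ∀ e, |Z e| ≤ z) (b : ι → Bool) (e : ι) :
    |sampleVec q b Z e| ≤ z / q := by
  have hq := q.2.1
  have hz : 0 ≤ z := (abs_nonneg _).trans (hZ e)
  unfold sampleVec
  split_ifs
  · rw [abs_div, abs_of_nonneg hq]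
    gcongr
    exact hZ e
  · rw [abs_zero]
    positivity

theorem abs_sampleVec_sub_le (hq : q ≠ 0) (hZ : ∀ e, |Z e| ≤ z) (b : ι → Bool) (e : ι) :
    |sampleVec q b Z e - Z e| ≤ z / q := by
  have hq0 : 0 < (q : ℝ) := unitInterval.pos_iff_ne_zero.mpr hq
  have hinv : 1 ≤ (q : ℝ)⁻¹ := (one_le_inv₀ hq0).mpr q.2.2
  have hz : 0 ≤ z := (abs_nonneg _).trans (hZ e)
  unfold sampleVec
  split_ifs
  · rw [div_eq_mul_inv, div_eq_mul_inv, ← mul_sub_one, abs_mul, abs_of_nonneg (sub_nonneg.mpr hinv)]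
    exact mul_le_mul (hZ e) (sub_le_self _ zero_le_one) (sub_nonneg.mpr hinv) hz
  · rw [zero_sub, abs_neg, div_eq_mul_inv]
    exact (hZ e).trans (le_mul_of_one_le_right hz hinv)

variable [Fintype ι]

theorem iIndepFun_sampleVec_sub (Z : ι → ℝ) :
    iIndepFun (fun e b => sampleVec q b Z e - Z e) (bernoulliProduct ι q) :=
  (iIndepFun_bernoulliProduct q).comp (fun e x => (if x then Z e / q else 0) - Z e)
    fun _ => measurable_of_finite _

theorem integral_sampleVec_sub (hq : q ≠ 0) (Z : ι → ℝ) (e : ι) :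
    ∫ b, (sampleVec q b Z e - Z e) ∂bernoulliProduct ι q = 0 := by
  have hq0 : (q : ℝ) ≠ 0 := Set.Icc.coe_ne_zero.mpr hq
  refine (integral_bernoulliProduct_apply q e fun x => (if x then Z e / q else 0) - Z e).trans ?_
  simp only [if_true, Bool.false_eq_true, if_false]
  field

theorem integral_sampleVec_sub_sq_le (hq : q ≠ 0) (Z : ι → ℝ) (e : ι) :
    ∫ b, (sampleVec q b Z e - Z e) ^ 2 ∂bernoulliProduct ι q ≤ Z e ^ 2 / q := by
  have hq0 : (q : ℝ) ≠ 0 := Set.Icc.coe_ne_zero.mpr hq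
  refine (integral_bernoulliProduct_apply q e
    fun x => ((if x then Z e / q else 0) - Z e) ^ 2).trans_le ?_
  simp only [if_true, Bool.false_eq_true, if_false]
  calc _ = Z e ^ 2 / q - Z e ^ 2 := by field
    _ ≤ Z e ^ 2 / q := sub_le_self _ (sq_nonneg _)

theorem abs_apply_le_of_isStarProjection {G : Matrix ι ι ℝ} (hG : IsStarProjection G) {μ : ℝ}
    (hμ : ∀ e, G e e ≤ μ) (e f : ι) : |G e f| ≤ μ := by
  classical
  have hdiag (e : ι) : 0 ≤ G e e :=
    (dotProduct_self_star_nonneg (G e)).trans_eq (dotProduct_row_self_of_isStarProjection hG e)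
  have hcs := Finset.sum_mul_sq_le_sq_mul_sq Finset.univ (G e) (G f)
  have hentry : ∑ k, G e k * G f k = G e f := by
    conv_rhs => rw [← hG.isIdempotentElem.eq, mul_apply]
    exact Finset.sum_congr rfl fun k _ => by rw [apply_comm_of_isStarProjection hG k f]
  have hrow (e : ι) : ∑ k, G e k ^ 2 = G e e := by
    simpa only [dotProduct, sq] using dotProduct_row_self_of_isStarProjection hG e
  rw [hentry, hrow, hrow] at hcs
  refine abs_le_of_sq_le_sq (hcs.trans ?_) ((hdiag e).trans (hμ e))
  rw [sq]
  exact mul_le_mul (hμ e) (hμ f) (hdiag f) ((hdiag e).trans (hμ e))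

variable {G : Matrix ι ι ℝ} {μ : ℝ}

theorem measureReal_le_abs_mulVec_sampleVec_sub_apply_le (hG : IsStarProjection G)
    (hμ : ∀ e, G e e ≤ μ) (hμ0 : 0 < μ) (hq : q ≠ 0) (hz : 0 < z) (hZ : ∀ e, |Z e| ≤ z) (f : ι) :
    (bernoulliProduct ι q).real {b | z / 2 ≤ |(G *ᵥ (sampleVec q b Z - Z)) f|} ≤
      2 * Real.exp (-(q / (16 * μ))) := by
  classical
  have hq0 : 0 < (q : ℝ) := unitInterval.pos_iff_ne_zero.mpr hq
  have hbound (e : ι) (b : ι → Bool) : |G f e * (sampleVec q b Z e - Z e)| ≤ μ * (z / q) := by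
    rw [abs_mul]
    exact mul_le_mul (abs_apply_le_of_isStarProjection hG hμ f e) (abs_sampleVec_sub_le hq hZ b e)
      (abs_nonneg _) hμ0.le
  have hvar : ∑ e, ∫ b, (G f e * (sampleVec q b Z e - Z e)) ^ 2 ∂bernoulliProduct ι q ≤
      μ * (z ^ 2 / q) := by
    simp only [mul_pow, integral_const_mul]
    calc _ ≤ ∑ e, G f e ^ 2 * (z ^ 2 / q) := by
          gcongr with e
          refine (integral_sampleVec_sub_sq_le hq Z e).trans ?_
          gcongr ?_ / _
          exact sq_le_sq.mpr ((hZ e).trans (le_abs_self z))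
      _ = G f f * (z ^ 2 / q) := by
          rw [← Finset.sum_mul, ← dotProduct_row_self_of_isStarProjection hG f]
          simp only [dotProduct, sq]
      _ ≤ _ := by gcongr; exact hμ f
  refine (measureReal_abs_sum_ge_le_of_iIndepFun (s := q / (4 * μ * z))
    ((iIndepFun_sampleVec_sub Z).comp (fun e x => G f e * x) fun e => measurable_const_mul _)
    (fun e => .of_discrete) hbound (fun e => ?_) hvar (by positivity) ?_).trans_eq ?_
  · simp only [Function.comp_apply, integral_const_mul, integral_sampleVec_sub hq, mul_zero]
  · rw [show q / (4 * μ * z) * (μ * (z / q)) = (1 : ℝ) / 4 by field]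
    norm_num
  · congr 2
    field

theorem isSubgaussianVector_sampleVec_sub (hq : q ≠ 0) (hZ : ∀ e, |Z e| ≤ z) :
    IsSubgaussianVector (fun b => sampleVec q b Z - Z) ((z / q).toNNReal ^ 2)
      (bernoulliProduct ι q) :=
  .of_iIndepFun_of_abs_le (iIndepFun_sampleVec_sub Z) (fun _ => .of_discrete)
    (integral_sampleVec_sub hq Z) fun b e =>
      (abs_sampleVec_sub_le hq hZ b e).trans (Real.le_coe_toNNReal _)

end Sampling

section Golfing

variable {m n : Type*} [Fintype m] [Fintype n] [DecidableEq n]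

/-- `Y` vanishes on `ω`, has entries of size at most `a`, its component off the range of the
projection `G` has spectral norm at most `σ`, and its component in that range approximates `Z` up to
`ε` in each entry. This is the part of the dual certificate built by golfing outside the
support `ω`. -/
structure IsGolfingCertificate (G : Matrix (m × n) (m × n) ℝ) (ω : m × n → Bool)
    (Z : m × n → ℝ) (a σ ε : ℝ) (Y : m × n → ℝ) : Prop where
  eq_zero : ∀ e, ω e → Y e = 0
  abs_le : ∀ e, |Y e| ≤ a
  specNorm_le : specNorm (Y - G *ᵥ Y) ≤ σ
  abs_sub_le : ∀ e, |Z e - (G *ᵥ Y) e| ≤ ε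

variable {G : Matrix (m × n) (m × n) ℝ} {Z : m × n → ℝ} {z : ℝ} {q : unitInterval}
  (hperp : ∀ X, specNorm (X - G *ᵥ X) ≤ specNorm X)

theorem isGolfingCertificate_zero (ω : m × n → Bool) {a σ : ℝ} (ha : 0 ≤ a) (hσ : 0 ≤ σ)
    (hZ : ∀ e, |Z e| ≤ z) : IsGolfingCertificate G ω Z a σ z 0 where
  eq_zero _ _ := rfl
  abs_le e := by simpa using ha
  specNorm_le := by simpa [specNorm_zero] using hσ
  abs_sub_le e := by simpa using hZ e

include hperp

theorem IsGolfingCertificate.sampleVec_add {ω b : m × n → Bool} {a σ τ ε : ℝ} {Y : m × n → ℝ}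
    (hGZ : G *ᵥ Z = Z) (hZ : ∀ e, |Z e| ≤ z) (hτ : specNorm (sampleVec q b Z - Z) ≤ τ)
    (hY : IsGolfingCertificate G ω (Z - G *ᵥ sampleVec q b Z) a σ ε Y) :
    IsGolfingCertificate G (fun e => ω e && !b e) Z (z / q + a) (τ + σ) ε (sampleVec q b Z + Y)
    where
  eq_zero e he := by
    obtain ⟨hω, hb⟩ := Bool.and_eq_true_iff.mp he
    simp_all [sampleVec, hY.eq_zero e hω]
  abs_le e := (abs_add_le _ _).trans (add_le_add (abs_sampleVec_le hZ b e) (hY.abs_le e))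
  specNorm_le := by
    have hsplit : sampleVec q b Z + Y - G *ᵥ (sampleVec q b Z + Y) =
        (sampleVec q b Z - Z - G *ᵥ (sampleVec q b Z - Z)) + (Y - G *ᵥ Y) := by
      rw [mulVec_add, mulVec_sub, hGZ]
      abel
    rw [hsplit]
    exact (specNorm_add_le _ _).trans (add_le_add ((hperp _).trans hτ) hY.specNorm_le)
  abs_sub_le e := by
    simpa only [mulVec_add, Pi.add_apply, Pi.sub_apply, sub_sub] using hY.abs_sub_le e

variable {μ : ℝ} (hG : IsStarProjection G) (hμ : ∀ e, G e e ≤ μ) (hμ0 : 0 < μ)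
  (hq : q ≠ 0) (hcard : Fintype.card n ≤ Fintype.card m)

omit hperp in
include hG hμ hμ0 hq hcard in
theorem measureReal_sampleVec_bad_le (hz : 0 < z) (hZ : ∀ e, |Z e| ≤ z) :
    (bernoulliProduct (m × n) q).real ((⋃ f, {b | z / 2 ≤ |(G *ᵥ (sampleVec q b Z - Z)) f|}) ∪
      {b | 17 * (z / q) * √(Fintype.card m) < specNorm (sampleVec q b Z - Z)}) ≤
      Fintype.card m * Fintype.card n * (2 * Real.exp (-(q / (16 * μ)))) +
        Real.exp (-Fintype.card m) := by
  classical
  have hq0 : 0 < (q : ℝ) := unitInterval.pos_iff_ne_zero.mpr hq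
  refine (measureReal_union_le _ _).trans (add_le_add ?_ ?_)
  · refine (measureReal_iUnion_fintype_le _).trans ((Finset.sum_le_card_nsmul _ _ _ fun f _ =>
      measureReal_le_abs_mulVec_sampleVec_sub_apply_le hG hμ hμ0 hq hz hZ f).trans_eq ?_)
    simp
  · refine (isSubgaussianVector_sampleVec_sub hq hZ).measureReal_lt_specNorm_le (by positivity) ?_
      hcard
    rw [NNReal.coe_pow, Real.coe_toNNReal _ (by positivity), mul_pow]
    nlinarith [sq_nonneg (z / q)]

include hG hμ hμ0 hq hcard

/-- A random set of density `p * (1 - q) ^ k` is one of density `p` with `k` independent samples of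
density `q` removed, one for each round of golfing; a round halves the sup norm of the residual. -/
theorem measureReal_not_exists_isGolfingCertificate_le (p : unitInterval) (k : ℕ) (hz : 0 < z)
    (hGZ : G *ᵥ Z = Z) (hZ : ∀ e, |Z e| ≤ z) :
    (bernoulliProduct (m × n) (p * unitInterval.symm q ^ k)).real
        {ω | ¬∃ Y, IsGolfingCertificate G ω Z (2 * (z / q)) (34 * (z / q) * √(Fintype.card m))
          (z / 2 ^ k) Y} ≤
      k * (Fintype.card m * Fintype.card n * (2 * Real.exp (-(q / (16 * μ)))) +
        Real.exp (-Fintype.card m)) := by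
  classical
  have hq0 : 0 < (q : ℝ) := unitInterval.pos_iff_ne_zero.mpr hq
  set η := Fintype.card m * Fintype.card n * (2 * Real.exp (-(q / (16 * μ)))) +
    Real.exp (-Fintype.card m)
  induction k generalizing Z z with
  | zero =>
    have hzero (ω : m × n → Bool) : ∃ Y, IsGolfingCertificate G ω Z (2 * (z / q))
        (34 * (z / q) * √(Fintype.card m)) (z / 2 ^ 0) Y :=
      ⟨0, by simpa using isGolfingCertificate_zero ω (by positivity) (by positivity) hZ⟩
    simp only [hzero, not_true_eq_false, Set.ofPred_false, measureReal_empty, Nat.cast_zero,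
      zero_mul, le_refl]
  | succ k ih =>
    rw [pow_succ, ← mul_assoc, ← map_bernoulliProduct_sdiff,
      map_measureReal_apply (by fun_prop) .of_discrete]
    refine (measureReal_prod_le_of_fiber .of_discrete .of_discrete (η := k * η) (by positivity)
      (B := (⋃ f, {b | z / 2 ≤ |(G *ᵥ (sampleVec q b Z - Z)) f|}) ∪
        {b | 17 * (z / q) * √(Fintype.card m) < specNorm (sampleVec q b Z - Z)})
      fun b hb => ?_).trans ?_
    · simp only [Set.mem_union, Set.mem_iUnion, Set.mem_ofPred_eq, not_or, not_exists, not_le,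
        not_lt] at hb
      have hres (e : m × n) : |(Z - G *ᵥ sampleVec q b Z) e| ≤ z / 2 := by
        simpa only [mulVec_sub, hGZ, Pi.sub_apply, abs_sub_comm] using (hb.1 e).le
      refine (measureReal_mono fun ω hω => ?_).trans (ih (half_pos hz) ?_ hres)
      · rintro ⟨Y, hY⟩
        refine hω ⟨sampleVec q b Z + Y, ?_⟩
        convert hY.sampleVec_add hperp hGZ hZ hb.2 using 1 <;> field
      · rw [mulVec_sub, hGZ, mulVec_mulVec, hG.isIdempotentElem.eq]
    · refine (add_le_add_left (measureReal_sampleVec_bad_le hG hμ hμ0 hq hcard hz hZ) _).trans_eq ?_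
      push_cast
      ring

end Golfing

section RandomSigns

variable {ι : Type*}

/-- The sign encoded by a Boolean. -/
noncomputable def boolSign (b : Bool) : ℝ := if b then 1 else -1

/-- The sign matrix, with vectorized entries, of a matrix with support `ω` and signs `s`. -/
noncomputable def signVec (ω s : ι → Bool) (e : ι) : ℝ := if ω e then boolSign (s e) else 0

variable [Fintype ι]

/-- The law of independent uniform signs, encoded by Booleans. -/
noncomputable abbrev uniformSigns (ι : Type*) [Fintype ι] : Measure (ι → Bool) :=
  bernoulliProduct ι ⟨1 / 2, by norm_num, by norm_num⟩

theorem isSubgaussianVector_signVec (ω : ι → Bool) :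
    IsSubgaussianVector (signVec ω) 1 (uniformSigns ι) := by
  have h := IsSubgaussianVector.of_iIndepFun_of_abs_le (X := signVec ω) (M := 1)
    (P := uniformSigns ι)
    ((iIndepFun_bernoulliProduct _).comp (fun e x => if ω e then boolSign x else 0)
      fun _ => measurable_of_finite _)
    (fun _ => .of_discrete) (fun e => ?_) fun s e => ?_
  · rwa [one_pow] at h
  · refine (integral_bernoulliProduct_apply _ e fun x => if ω e then boolSign x else 0).trans ?_
    split_ifs
    · norm_num [boolSign]
    · simp
  · unfold signVec boolSign
    split_ifs <;> simp

/-- For `|t| ≤ 2 / c` the factor `ρ` pays for the linearization of `exp (t ^ 2 / 2)`, and for larger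
`|t|` the bound `cosh t ≤ exp |t|` suffices. -/
theorem one_add_mul_cosh_sub_one_le {ρ c : ℝ} (hρ0 : 0 ≤ ρ) (hρ1 : ρ ≤ 1) (hc : 0 < c)
    (hρc : ρ * Real.exp (2 / c ^ 2) ≤ c) (t : ℝ) :
    1 + ρ * (Real.cosh t - 1) ≤ Real.exp (c * t ^ 2 / 2) := by
  rcases le_total (2 / c) |t| with ht | ht
  · have hsq : |t| ≤ c * t ^ 2 / 2 := by
      rw [div_le_iff₀ hc] at ht
      nlinarith [abs_nonneg t, sq_abs t]
    have hcosh : Real.cosh t ≤ Real.exp |t| := by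
      rw [← Real.cosh_abs, Real.cosh_eq]
      linarith [Real.exp_le_exp.mpr (neg_le_self (abs_nonneg t))]
    nlinarith [Real.one_le_cosh t, Real.exp_le_exp.mpr hsq]
  · have hy : t ^ 2 / 2 ≤ 2 / c ^ 2 := by
      have := pow_le_pow_left₀ (abs_nonneg t) ht 2
      rw [sq_abs, div_pow] at this
      linarith [show (2 : ℝ) ^ 2 / c ^ 2 = 2 * (2 / c ^ 2) by ring]
    have hexp : Real.exp (t ^ 2 / 2) - 1 ≤ t ^ 2 / 2 * Real.exp (t ^ 2 / 2) := by
      have := Real.one_sub_le_exp_neg (t ^ 2 / 2)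
      rw [Real.exp_neg] at this
      have h := mul_le_mul_of_nonneg_right this (Real.exp_pos (t ^ 2 / 2)).le
      rw [inv_mul_cancel₀ (Real.exp_pos _).ne'] at h
      linarith
    calc 1 + ρ * (Real.cosh t - 1) ≤ 1 + ρ * (t ^ 2 / 2 * Real.exp (2 / c ^ 2)) := by
          gcongr
          refine (sub_le_sub_right (Real.cosh_le_exp_half_sq t) 1).trans (hexp.trans ?_)
          gcongr
      _ = t ^ 2 / 2 * (ρ * Real.exp (2 / c ^ 2)) + 1 := by ring
      _ ≤ t ^ 2 / 2 * c + 1 := by gcongr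
      _ ≤ Real.exp (t ^ 2 / 2 * c) := Real.add_one_le_exp _
      _ = _ := by ring_nf

theorem hasSubgaussianMGF_sparseSign (ρ : unitInterval) {c : ℝ≥0} (hc : 0 < c)
    (hρc : ρ * Real.exp (2 / c ^ 2) ≤ c) :
    HasSubgaussianMGF (fun x : Bool × Bool => if x.1 then boolSign x.2 else 0) c
      ((bernoulliMeasure true false ρ).prod
        (bernoulliMeasure true false ⟨1 / 2, by norm_num, by norm_num⟩)) where
  integrable_exp_mul _ := .of_finite
  mgf_le t := by
    refine le_trans (le_of_eq ?_) (one_add_mul_cosh_sub_one_le ρ.2.1 ρ.2.2 hc hρc t)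
    rw [mgf, integral_prod _ .of_finite]
    simp only [integral_bernoulliMeasure, boolSign, Real.cosh_eq]
    simp
    ring

theorem isSubgaussianVector_signVec_prod (ρ : unitInterval) {c : ℝ≥0} (hc : 0 < c)
    (hρc : ρ * Real.exp (2 / c ^ 2) ≤ c) :
    IsSubgaussianVector (fun x : (ι → Bool) × (ι → Bool) => signVec x.1 x.2) c
      ((bernoulliProduct ι ρ).prod (uniformSigns ι)) := by
  let ν := (bernoulliMeasure true false ρ).prod
    (bernoulliMeasure true false ⟨1 / 2, by norm_num, by norm_num⟩)
  let g (x : Bool × Bool) : ℝ := if x.1 then boolSign x.2 else 0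
  have hpi : IsSubgaussianVector (fun (f : ι → Bool × Bool) e => g (f e)) c
      (Measure.pi fun _ => ν) :=
    .of_iIndepFun (iIndepFun_pi (X := fun _ => g) fun _ => .of_discrete) fun e =>
      HasSubgaussianMGF.of_map (X := g) (Y := Function.eval e) (measurable_pi_apply e).aemeasurable
        (by rw [(measurePreserving_eval (fun _ : ι => ν) e).map_eq]
            exact hasSubgaussianMGF_sparseSign ρ hc hρc)
  have hmap := (measurePreserving_arrowProdEquivProdArrow Bool Bool ι
    (fun _ => bernoulliMeasure true false ρ)
    (fun _ => bernoulliMeasure true false ⟨1 / 2, by norm_num, by norm_num⟩)).symm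
  rw [← hmap.map_eq] at hpi
  exact hpi.of_map hmap.measurable.aemeasurable

end RandomSigns

section SignCertificate

variable {ι : Type*} [Fintype ι] [DecidableEq ι]

theorem IsSubgaussianVector.mulVec {Ω κ : Type*} {mΩ : MeasurableSpace Ω} {P : Measure Ω}
    [Fintype κ] {X : Ω → ι → ℝ} {c : ℝ≥0} (h : IsSubgaussianVector X c P)
    {A : Matrix κ ι ℝ} {s : ℝ≥0} (hs : s ≠ 0) (hA : ‖A‖ ≤ s) :
    IsSubgaussianVector (fun ω => A *ᵥ X ω) (s ^ 2 * c) P := by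
  classical
  intro v hv
  rw [← l2_opNorm_conjTranspose, conjTranspose_eq_transpose_of_trivial] at hA
  refine (h.hasSubgaussianMGF (v := Aᵀ *ᵥ v) hs ?_).congr (.of_forall fun ω => ?_)
  · calc (Aᵀ *ᵥ v) ⬝ᵥ (Aᵀ *ᵥ v) ≤ ‖Aᵀ‖ ^ 2 * (v ⬝ᵥ v) := dotProduct_mulVec_self_le _ _
      _ ≤ ‖Aᵀ‖ ^ 2 := mul_le_of_le_one_right (sq_nonneg _) hv
      _ ≤ s ^ 2 := by gcongr
  · dsimp only
    rw [mulVec_transpose, dotProduct_mulVec]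

theorem l2_opNorm_one_le : ‖(1 : Matrix ι ι ℝ)‖ ≤ 1 :=
  (IsStarProjection.one (R := Matrix ι ι ℝ)).norm_le

theorem exists_eq_one_add_mul_of_l2_opNorm_le_half {A : Matrix ι ι ℝ} (hA : ‖A‖ ≤ 1 / 2) :
    ∃ Q : Matrix ι ι ℝ, Q = 1 + A * Q ∧ ‖Q‖ ≤ 2 := by
  have hgeom := mul_neg_geom_series A (hA.trans_lt (by norm_num))
  set Q := ∑' i : ℕ, A ^ i
  have hQ : Q = 1 + A * Q := by rw [← hgeom, sub_mul, one_mul, sub_add_cancel]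
  refine ⟨Q, hQ, ?_⟩
  have hnorm : ‖Q‖ ≤ 1 + 1 / 2 * ‖Q‖ := by
    conv_lhs => rw [hQ]
    exact (norm_add_le _ _).trans (add_le_add l2_opNorm_one_le
      ((norm_mul_le _ _).trans (mul_le_mul_of_nonneg_right hA (norm_nonneg _))))
  linarith

variable {m n : Type*} [Fintype m] [Fintype n] [DecidableEq n]

/-- `H` is supported on `ω`, its component off the range of the projection `G` has the prescribed
signs on `ω`, its component in that range has entries of size at most `ε`, and it differs from the
sign matrix by at most `σ` in spectral norm. This is the part of the dual certificate supported
on `ω`. -/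
structure IsSignCertificate (G : Matrix (m × n) (m × n) ℝ) (ω s : m × n → Bool) (σ ε : ℝ)
    (H : m × n → ℝ) : Prop where
  eq_zero : ∀ e, ω e = false → H e = 0
  sub_mulVec_eq : ∀ e, ω e → H e - (G *ᵥ H) e = boolSign (s e)
  specNorm_le : specNorm (H - signVec ω s) ≤ σ
  abs_le : ∀ e, |(G *ᵥ H) e| ≤ ε

variable [DecidableEq m] {G : Matrix (m × n) (m × n) ℝ}

theorem isSignCertificate_of_eq_add {ω s : m × n → Bool} {σ ε : ℝ} {H : m × n → ℝ}
    (hH : H = signVec ω s + mask ω *ᵥ G *ᵥ mask ω *ᵥ H) (hσ : specNorm (H - signVec ω s) ≤ σ)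
    (hε : ∀ e, |(G *ᵥ H) e| ≤ ε) : IsSignCertificate G ω s σ ε H := by
  have hoff (e : m × n) (he : ω e = false) : H e = 0 := by
    rw [hH]
    simp [mask, mulVec_diagonal, signVec, he, -mulVec_mulVec]
  have hmask : mask ω *ᵥ H = H := by
    ext e
    cases he : ω e <;> simp [mask, mulVec_diagonal, he, hoff]
  refine ⟨hoff, fun e he => ?_, hσ, hε⟩
  have heq := congrFun hH e
  rw [hmask] at heq
  simp only [mask, mulVec_diagonal, Pi.add_apply, signVec, he, if_true, one_mul] at heq
  linarith

theorem measureReal_le_abs_mulVec_mulVec_signVec_apply_le (hG : IsStarProjection G) {μ : ℝ}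
    (hμ : ∀ e, G e e ≤ μ) (hμ0 : 0 < μ) {Q : Matrix (m × n) (m × n) ℝ} (hQ : ‖Q‖ ≤ 2)
    (ω : m × n → Bool) (f : m × n) :
    (uniformSigns (m × n)).real {s | 1 / 4 ≤ |(G *ᵥ Q *ᵥ signVec ω s) f|} ≤
      2 * Real.exp (-(1 / (128 * μ))) := by
  let r : ℝ≥0 := ⟨2 * √μ, by positivity⟩
  have hr : (r : ℝ) ^ 2 = 4 * μ := by
    change (2 * √μ) ^ 2 = 4 * μ
    rw [mul_pow, Real.sq_sqrt hμ0.le]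
    norm_num
  have hrow : (Qᵀ *ᵥ G f) ⬝ᵥ (Qᵀ *ᵥ G f) ≤ r ^ 2 := by
    rw [← l2_opNorm_conjTranspose, conjTranspose_eq_transpose_of_trivial] at hQ
    rw [hr]
    refine (dotProduct_mulVec_self_le _ _).trans ?_
    rw [dotProduct_row_self_of_isStarProjection hG]
    refine (mul_le_mul_of_nonneg_left (hμ f) (sq_nonneg _)).trans ?_
    gcongr
    exact (pow_le_pow_left₀ (norm_nonneg _) hQ 2).trans_eq (by norm_num)
  have hr0 : r ≠ 0 := by
    have : 0 < 2 * √μ := by positivity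
    exact fun h => this.ne' (congrArg NNReal.toReal h)
  have hsub := (isSubgaussianVector_signVec ω).hasSubgaussianMGF hr0 hrow
  have happly (s : m × n → Bool) :
      (Qᵀ *ᵥ G f) ⬝ᵥ signVec ω s = (G *ᵥ Q *ᵥ signVec ω s) f := by
    rw [mulVec_transpose, ← dotProduct_mulVec]
    rfl
  simp only [happly] at hsub
  refine (measureReal_abs_ge_le hsub (by norm_num)).trans_eq ?_
  rw [NNReal.coe_mul, NNReal.coe_pow, hr, NNReal.coe_one]
  congr 2
  field

/-- The certificate is `H = (1 - P_Ω P_T P_Ω)⁻¹ sgn`, with the inverse given by a Neumann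
series. -/
theorem measureReal_not_exists_isSignCertificate_le (hG : IsStarProjection G) {μ : ℝ}
    (hμ : ∀ e, G e e ≤ μ) (hμ0 : 0 < μ) (hcard : Fintype.card n ≤ Fintype.card m)
    (ω : m × n → Bool) (hω : ‖mask ω * G‖ ≤ 1 / 400) :
    (uniformSigns (m × n)).real
        {s | ¬∃ H, IsSignCertificate G ω s (1 / 8 * √(Fintype.card m)) (1 / 4) H} ≤
      Real.exp (-Fintype.card m) +
        Fintype.card m * Fintype.card n * (2 * Real.exp (-(1 / (128 * μ)))) := by
  have hA : ‖mask ω * G * mask ω‖ ≤ 1 / 400 :=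
    (norm_mul_le _ _).trans ((mul_le_of_le_one_right (norm_nonneg _)
      (isStarProjection_mask ω).norm_le).trans hω)
  obtain ⟨Q, hQ, hQ2⟩ := exists_eq_one_add_mul_of_l2_opNorm_le_half (hA.trans (by norm_num))
  set A := mask ω * G * mask ω with hAdef
  have hfix (x : m × n → ℝ) : Q *ᵥ x = x + (A * Q) *ᵥ x := by
    conv_lhs => rw [hQ, add_mulVec, one_mulVec]
  have hspec : (uniformSigns (m × n)).real
      {s | 1 / 8 * √(Fintype.card m) < specNorm (Q *ᵥ signVec ω s - signVec ω s)} ≤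
      Real.exp (-Fintype.card m) := by
    simp only [hfix, add_sub_cancel_left]
    refine ((isSubgaussianVector_signVec ω).mulVec (s := 1 / 200) (by norm_num)
      ?_).measureReal_lt_specNorm_le (by norm_num) (by norm_num) hcard
    exact (norm_mul_le _ _).trans ((mul_le_mul hA hQ2 (norm_nonneg _) (by norm_num)).trans_eq
      (by norm_num))
  have hcover : {s | ¬∃ H, IsSignCertificate G ω s (1 / 8 * √(Fintype.card m)) (1 / 4) H} ⊆
      {s | 1 / 8 * √(Fintype.card m) < specNorm (Q *ᵥ signVec ω s - signVec ω s)} ∪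
        ⋃ f, {s | 1 / 4 ≤ |(G *ᵥ Q *ᵥ signVec ω s) f|} := by
    intro s hs
    contrapose! hs
    simp only [Set.mem_union, Set.mem_iUnion, Set.mem_ofPred_eq, not_or, not_exists, not_lt,
      not_le] at hs
    have hH := isSignCertificate_of_eq_add (G := G) ?_ hs.1 fun e => (hs.2 e).le
    · exact fun h => h _ hH
    conv_lhs => rw [hfix, hAdef]
    simp only [mulVec_mulVec, mul_assoc]
  refine (measureReal_mono hcover).trans ((measureReal_union_le _ _).trans (add_le_add hspec ?_))
  refine (measureReal_iUnion_fintype_le _).trans ((Finset.sum_le_card_nsmul _ _ _ fun f _ =>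
    measureReal_le_abs_mulVec_mulVec_signVec_apply_le hG hμ hμ0 hQ2 ω f).trans_eq ?_)
  simp

end SignCertificate

section TangentProjection

variable {m n r : Type*}

/-- The matrix `M` as a vector indexed by its positions, listed row by row. Linear operators on
matrices act on these vectors as matrices indexed by positions. -/
def flat (M : Matrix m n ℝ) : m × n → ℝ := vec Mᵀ

theorem flat_apply (M : Matrix m n ℝ) (e : m × n) : flat M e = M e.1 e.2 := rfl

theorem flat_add (M N : Matrix m n ℝ) : flat (M + N) = flat M + flat N := rfl

theorem flat_sub (M N : Matrix m n ℝ) : flat (M - N) = flat M - flat N := rfl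

theorem exists_flat_eq (X : m × n → ℝ) : ∃ M : Matrix m n ℝ, flat M = X :=
  ⟨of (curry X), rfl⟩

theorem specNorm_flat [Fintype m] [Fintype n] [DecidableEq n] (M : Matrix m n ℝ) :
    specNorm (flat M) = ‖M‖ := rfl

theorem kronecker_mulVec_flat [Fintype m] [Fintype n] (A : Matrix m m ℝ) (B : Matrix n n ℝ)
    (M : Matrix m n ℝ) : (A ⊗ₖ B) *ᵥ flat M = flat (A * M * Bᵀ) := by
  rw [flat, flat, kronecker_mulVec_vec, transpose_mul, transpose_mul, transpose_transpose,
    Matrix.mul_assoc]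

theorem dotProduct_mulVec_mulVec_self [Fintype m] [Fintype n] (A : Matrix m n ℝ) (x : n → ℝ) :
    (A *ᵥ x) ⬝ᵥ (A *ᵥ x) = x ⬝ᵥ (Aᵀ * A) *ᵥ x := by
  rw [dotProduct_comm, ← dotProduct_transpose_mulVec, mulVec_mulVec]

variable [Fintype r] [DecidableEq m] [DecidableEq n]

/-- The orthogonal projection onto the orthogonal complement of the column space of `U`, when the
columns of `U` are orthonormal. -/
def coProj (U : Matrix m r ℝ) : Matrix m m ℝ := 1 - U * Uᵀ

theorem coProj_transpose (U : Matrix m r ℝ) : (coProj U)ᵀ = coProj U := by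
  simp [coProj, transpose_mul]

section Orthonormal

variable [Fintype m] [DecidableEq r]

theorem transpose_mul_coProj {U : Matrix m r ℝ} (hU : Uᵀ * U = 1) : Uᵀ * coProj U = 0 := by
  rw [coProj, Matrix.mul_sub, Matrix.mul_one, ← Matrix.mul_assoc, hU, Matrix.one_mul, sub_self]

theorem coProj_mul {U : Matrix m r ℝ} (hU : Uᵀ * U = 1) : coProj U * U = 0 := by
  rw [← coProj_transpose, ← transpose_transpose U, ← transpose_mul, transpose_transpose U,
    transpose_mul_coProj hU, transpose_zero]

theorem isStarProjection_coProj {U : Matrix m r ℝ} (hU : Uᵀ * U = 1) :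
    IsStarProjection (coProj U) where
  isIdempotentElem := by
    rw [IsIdempotentElem]
    nth_rw 2 [coProj]
    rw [Matrix.mul_sub, ← Matrix.mul_assoc, coProj_mul hU]
    simp
  isSelfAdjoint := by
    rw [IsSelfAdjoint, star_eq_conjTranspose, conjTranspose_eq_transpose_of_trivial,
      coProj_transpose]

end Orthonormal

/-- The orthogonal projection onto the tangent space `{U * Qᵀ + R * Vᵀ}` of the rank-`r` matrices
at a matrix with column space `U` and row space `V`, acting on flattened matrices. -/
def tangentProj (U : Matrix m r ℝ) (V : Matrix n r ℝ) : Matrix (m × n) (m × n) ℝ :=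
  1 - coProj U ⊗ₖ coProj V

variable {U : Matrix m r ℝ} {V : Matrix n r ℝ}

theorem tangentProj_apply_self_le {μ : ℝ} (hU : ∀ i, ∑ k, U i k ^ 2 ≤ μ)
    (hV : ∀ j, ∑ k, V j k ^ 2 ≤ μ) (e : m × n) : tangentProj U V e e ≤ 2 * μ := by
  have hdiag : tangentProj U V e e = 1 - (1 - ∑ k, U e.1 k ^ 2) * (1 - ∑ k, V e.2 k ^ 2) := by
    simp [tangentProj, coProj, kroneckerMap_apply, mul_apply, sq]
  have := hU e.1
  have := hV e.2
  have : 0 ≤ (∑ k, U e.1 k ^ 2) * ∑ k, V e.2 k ^ 2 := by positivity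
  linarith

variable [Fintype m] [Fintype n]

theorem tangentProj_mulVec_flat (M : Matrix m n ℝ) :
    tangentProj U V *ᵥ flat M = flat M - flat (coProj U * M * coProj V) := by
  rw [tangentProj, sub_mulVec, one_mulVec, kronecker_mulVec_flat, coProj_transpose]

theorem coProj_mul_mul_coProj_of_tangentProj_mulVec_eq_zero {M : Matrix m n ℝ}
    (h : tangentProj U V *ᵥ flat M = 0) : coProj U * M * coProj V = M := by
  rw [tangentProj_mulVec_flat, sub_eq_zero] at h
  exact ext fun i j => (congrFun h (i, j)).symm

variable [DecidableEq r]

theorem isStarProjection_tangentProj (hU : Uᵀ * U = 1) (hV : Vᵀ * V = 1) :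
    IsStarProjection (tangentProj U V) := by
  refine IsStarProjection.one_sub ⟨?_, ?_⟩
  · rw [IsIdempotentElem, ← mul_kronecker_mul, (isStarProjection_coProj hU).isIdempotentElem.eq,
      (isStarProjection_coProj hV).isIdempotentElem.eq]
  · rw [IsSelfAdjoint, star_eq_conjTranspose, conjTranspose_kronecker]
    simp only [conjTranspose_eq_transpose_of_trivial, coProj_transpose]

theorem specNorm_sub_tangentProj_mulVec_le (hU : Uᵀ * U = 1) (hV : Vᵀ * V = 1) (X : m × n → ℝ) :
    specNorm (X - tangentProj U V *ᵥ X) ≤ specNorm X := by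
  obtain ⟨M, rfl⟩ := exists_flat_eq X
  rw [tangentProj_mulVec_flat, sub_sub_cancel, specNorm_flat, specNorm_flat]
  calc ‖coProj U * M * coProj V‖ ≤ ‖coProj U‖ * ‖M‖ * ‖coProj V‖ :=
        (l2_opNorm_mul _ _).trans (by gcongr; exact l2_opNorm_mul _ _)
    _ ≤ 1 * ‖M‖ * 1 := by
        gcongr
        exacts [(isStarProjection_coProj hU).norm_le, (isStarProjection_coProj hV).norm_le]
    _ = ‖M‖ := by ring

theorem tangentProj_mulVec_factor (hU : Uᵀ * U = 1) :
    tangentProj U V *ᵥ flat (U * Vᵀ) = flat (U * Vᵀ) := by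
  rw [tangentProj_mulVec_flat, ← Matrix.mul_assoc, coProj_mul hU]
  simp only [Matrix.zero_mul]
  exact sub_zero _

theorem transpose_mul_of_tangentProj_mulVec_eq_zero (hU : Uᵀ * U = 1) {M : Matrix m n ℝ}
    (h : tangentProj U V *ᵥ flat M = 0) : Uᵀ * M = 0 := by
  rw [← coProj_mul_mul_coProj_of_tangentProj_mulVec_eq_zero h, ← Matrix.mul_assoc,
    ← Matrix.mul_assoc, transpose_mul_coProj hU, Matrix.zero_mul, Matrix.zero_mul]

theorem mul_coProj_of_tangentProj_mulVec_eq_zero (hV : Vᵀ * V = 1) {M : Matrix m n ℝ}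
    (h : tangentProj U V *ᵥ flat M = 0) : M * coProj V = M := by
  rw [← coProj_mul_mul_coProj_of_tangentProj_mulVec_eq_zero h, Matrix.mul_assoc,
    (isStarProjection_coProj hV).isIdempotentElem.eq]

theorem specNorm_factor_add_le_one (hU : Uᵀ * U = 1) (hV : Vᵀ * V = 1) {X : m × n → ℝ}
    (hX : specNorm X ≤ 1) (h : tangentProj U V *ᵥ X = 0) :
    specNorm (flat (U * Vᵀ) + X) ≤ 1 := by
  obtain ⟨M, rfl⟩ := exists_flat_eq X
  have hUM := transpose_mul_of_tangentProj_mulVec_eq_zero hU h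
  have hMV := mul_coProj_of_tangentProj_mulVec_eq_zero hV h
  have hgram : (U * Vᵀ + M)ᵀ * (U * Vᵀ + M) = V * Vᵀ + (M * coProj V)ᵀ * (M * coProj V) := by
    have hMU : Mᵀ * U = 0 := by rw [← transpose_eq_zero, transpose_mul, transpose_transpose, hUM]
    rw [hMV, transpose_add, transpose_mul, transpose_transpose, Matrix.add_mul, Matrix.mul_add,
      Matrix.mul_add, Matrix.mul_assoc V, Matrix.mul_assoc V, ← Matrix.mul_assoc Uᵀ, hU, hUM,
      ← Matrix.mul_assoc Mᵀ, hMU]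
    simp
  refine l2_opNorm_le_of_forall (A := U * Vᵀ + M) zero_le_one fun x => ?_
  have hM : (M *ᵥ coProj V *ᵥ x) ⬝ᵥ (M *ᵥ coProj V *ᵥ x) ≤ (coProj V *ᵥ x) ⬝ᵥ (coProj V *ᵥ x) :=
    (dotProduct_mulVec_self_le M _).trans
      (mul_le_of_le_one_left (dotProduct_star_self_nonneg (coProj V *ᵥ x))
        (pow_le_one₀ (norm_nonneg _) hX))
  rw [mulVec_mulVec, dotProduct_mulVec_mulVec_self] at hM
  calc ((U * Vᵀ + M) *ᵥ x) ⬝ᵥ ((U * Vᵀ + M) *ᵥ x)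
      = x ⬝ᵥ (V * Vᵀ) *ᵥ x + x ⬝ᵥ ((M * coProj V)ᵀ * (M * coProj V)) *ᵥ x := by
        rw [dotProduct_mulVec_mulVec_self, hgram, add_mulVec, dotProduct_add]
    _ ≤ x ⬝ᵥ (V * Vᵀ) *ᵥ x + x ⬝ᵥ coProj V *ᵥ x := by
        gcongr
        rwa [dotProduct_mulVec_mulVec_self, coProj_transpose,
          (isStarProjection_coProj hV).isIdempotentElem.eq] at hM
    _ = 1 ^ 2 * (x ⬝ᵥ x) := by rw [← dotProduct_add, ← add_mulVec]; simp [coProj]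

end TangentProjection

section NuclearNorm

theorem dotProduct_le_norm_mul_norm {ι : Type*} [Fintype ι] (u v : ι → ℝ) :
    u ⬝ᵥ v ≤ ‖toLp 2 u‖ * ‖toLp 2 v‖ := by
  simpa [EuclideanSpace.inner_toLp_toLp, dotProduct_comm v u] using
    real_inner_le_norm (toLp 2 u) (toLp 2 v)

theorem specNorm_le_norm {m n : Type*} [Fintype m] [Fintype n] [DecidableEq n] (X : m × n → ℝ) :
    specNorm X ≤ ‖toLp 2 X‖ := by
  refine l2_opNorm_le_of_forall (norm_nonneg _) fun x => ?_
  rw [norm_toLp_sq, dotProduct, dotProduct, Fintype.sum_prod_type, Finset.sum_mul]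
  refine Finset.sum_le_sum fun i _ => ?_
  simpa only [mulVec, dotProduct, of_apply, curry, ← sq] using
    Finset.sum_mul_sq_le_sq_mul_sq Finset.univ (fun j => X (i, j)) x

variable {n1 n2 : ℕ}

theorem frob_eq_norm (A : Matrix (Fin n1) (Fin n2) ℝ) : frob A = ‖toLp 2 (flat A)‖ := by
  simp [frob, EuclideanSpace.norm_eq, Fintype.sum_prod_type, flat_apply]

theorem l1norm_eq_sum (A : Matrix (Fin n1) (Fin n2) ℝ) : l1norm A = ∑ e, |flat A e| := by
  rw [l1norm, Fintype.sum_prod_type]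
  rfl

theorem minner_eq_dotProduct (A B : Matrix (Fin n1) (Fin n2) ℝ) :
    minner A B = flat A ⬝ᵥ flat B := by
  rw [minner, dotProduct, Fintype.sum_prod_type]
  rfl

theorem spec_eq_l2_opNorm (B : Matrix (Fin n1) (Fin n2) ℝ) : spec B = ‖B‖ := by
  have hvalue (x : Fin n2 → ℝ) : √(∑ i, (∑ j, B i j * x j) ^ 2) = ‖toLp 2 (B *ᵥ x)‖ := by
    simp [EuclideanSpace.norm_eq, mulVec, dotProduct]
  have hball (x : Fin n2 → ℝ) : ∑ j, x j ^ 2 ≤ 1 ↔ ‖toLp 2 x‖ ≤ 1 := by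
    rw [← sq_le_one_iff₀ (norm_nonneg _), norm_toLp_sq]
    simp only [dotProduct, sq]
  have hle : ‖B‖ ∈ upperBounds {c : ℝ | ∃ x : Fin n2 → ℝ, ∑ j, x j ^ 2 ≤ 1 ∧
      c = √(∑ i, (∑ j, B i j * x j) ^ 2)} := by
    rintro _ ⟨x, hx, rfl⟩
    rw [hvalue]
    exact (l2_opNorm_mulVec B (toLp 2 x)).trans
      (mul_le_of_le_one_right (norm_nonneg _) ((hball x).mp hx))
  refine le_antisymm (csSup_le ⟨_, 0, by simp, rfl⟩ hle) ?_
  refine l2_opNorm_le_of_forall_dotProduct_le (Real.sSup_nonneg ?_) fun y x hy hx => ?_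
  · rintro _ ⟨x, -, rfl⟩
    exact Real.sqrt_nonneg _
  rw [← norm_toLp_sq, sq_le_one_iff₀ (norm_nonneg _)] at hx hy
  calc y ⬝ᵥ B *ᵥ x ≤ ‖toLp 2 y‖ * ‖toLp 2 (B *ᵥ x)‖ := dotProduct_le_norm_mul_norm _ _
    _ ≤ ‖toLp 2 (B *ᵥ x)‖ := mul_le_of_le_one_left (norm_nonneg _) hy
    _ ≤ spec B := le_csSup ⟨_, hle⟩ ⟨x, (hball x).mpr hx, (hvalue x).symm⟩

theorem abs_apply_le_l2_opNorm (B : Matrix (Fin n1) (Fin n2) ℝ) (i : Fin n1) (j : Fin n2) :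
    |B i j| ≤ ‖B‖ := by
  have hentry (A : Matrix (Fin n1) (Fin n2) ℝ) : A i j ≤ ‖A‖ := by
    simpa using dotProduct_mulVec_le A (y := Pi.single i 1) (x := Pi.single j 1) (by simp)
      (by simp)
  refine abs_le'.mpr ⟨hentry B, ?_⟩
  simpa using hentry (-B)

theorem dotProduct_le_nuc (A : Matrix (Fin n1) (Fin n2) ℝ) {X : Fin n1 × Fin n2 → ℝ}
    (hX : specNorm X ≤ 1) : flat A ⬝ᵥ X ≤ nuc A := by
  obtain ⟨B, rfl⟩ := exists_flat_eq X
  refine le_csSup ⟨∑ e, |flat A e|, ?_⟩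
    ⟨B, (spec_eq_l2_opNorm B).trans_le hX, (minner_eq_dotProduct A B).symm⟩
  rintro _ ⟨B, hB, rfl⟩
  rw [spec_eq_l2_opNorm] at hB
  rw [minner_eq_dotProduct]
  refine Finset.sum_le_sum fun e _ => (le_abs_self _).trans ?_
  rw [abs_mul]
  exact mul_le_of_le_one_right (abs_nonneg _) ((abs_apply_le_l2_opNorm B e.1 e.2).trans hB)

theorem nuc_le {A : Matrix (Fin n1) (Fin n2) ℝ} {c : ℝ}
    (h : ∀ B : Matrix (Fin n1) (Fin n2) ℝ, ‖B‖ ≤ 1 → flat A ⬝ᵥ flat B ≤ c) : nuc A ≤ c := by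
  refine csSup_le ⟨_, 0, by simp [spec_eq_l2_opNorm], rfl⟩ ?_
  rintro _ ⟨B, hB, rfl⟩
  rw [minner_eq_dotProduct]
  exact h B ((spec_eq_l2_opNorm B).symm.trans_le hB)

variable {r : Type*} [Fintype r] [DecidableEq r] {U : Matrix (Fin n1) r ℝ}
  {V : Matrix (Fin n2) r ℝ} {σ : r → ℝ}

theorem flat_mul_diagonal_mul_transpose_dotProduct (U : Matrix (Fin n1) r ℝ)
    (V : Matrix (Fin n2) r ℝ) (σ : r → ℝ) (B : Matrix (Fin n1) (Fin n2) ℝ) :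
    flat (U * diagonal σ * Vᵀ) ⬝ᵥ flat B = ∑ k, σ k * (Uᵀ * B * V) k k := by
  have htrace (A B : Matrix (Fin n1) (Fin n2) ℝ) : flat A ⬝ᵥ flat B = (A * Bᵀ).trace :=
    vec_dotProduct_vec Aᵀ Bᵀ
  rw [htrace, ← trace_transpose, transpose_mul, transpose_transpose, transpose_mul,
    transpose_transpose, transpose_mul, diagonal_transpose, ← Matrix.mul_assoc,
    ← Matrix.mul_assoc, trace_mul_comm, ← Matrix.mul_assoc, trace_mul_comm, trace]
  simp [Matrix.mul_assoc, diagonal_mul]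

theorem nuc_mul_diagonal_mul_transpose_le (hU : Uᵀ * U = 1) (hV : Vᵀ * V = 1) (hσ : ∀ k, 0 ≤ σ k) :
    nuc (U * diagonal σ * Vᵀ) ≤ ∑ k, σ k := by
  refine nuc_le fun B hB => ?_
  rw [flat_mul_diagonal_mul_transpose_dotProduct]
  refine Finset.sum_le_sum fun k _ => mul_le_of_le_one_right (hσ k) ?_
  have hcol {n : ℕ} {W : Matrix (Fin n) r ℝ} (hW : Wᵀ * W = 1) : W.col k ⬝ᵥ W.col k ≤ 1 :=
    ((congrFun₂ hW k k).trans (one_apply_eq k)).le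
  rw [Matrix.mul_assoc]
  exact (dotProduct_mulVec_le B (hcol hU) (hcol hV)).trans hB

theorem dotProduct_factor_add (hU : Uᵀ * U = 1) (hV : Vᵀ * V = 1) {X : Fin n1 × Fin n2 → ℝ}
    (hX : tangentProj U V *ᵥ X = 0) :
    flat (U * diagonal σ * Vᵀ) ⬝ᵥ (flat (U * Vᵀ) + X) = ∑ k, σ k := by
  obtain ⟨M, rfl⟩ := exists_flat_eq X
  rw [← flat_add, flat_mul_diagonal_mul_transpose_dotProduct, Matrix.mul_add,
    transpose_mul_of_tangentProj_mulVec_eq_zero hU hX, ← Matrix.mul_assoc, hU, Matrix.one_mul,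
    add_zero, hV]
  simp

theorem specNorm_smul {m n : Type*} [Fintype m] [Fintype n] [DecidableEq n] (c : ℝ)
    (X : m × n → ℝ) : specNorm (c • X) = |c| * specNorm X :=
  norm_smul c (of (curry X))

theorem add_dotProduct_add_norm_le_nuc (hU : Uᵀ * U = 1) (hV : Vᵀ * V = 1)
    {W : Fin n1 × Fin n2 → ℝ} (hW0 : tangentProj U V *ᵥ W = 0) (hW : specNorm W ≤ 1 / 2)
    (N : Matrix (Fin n1) (Fin n2) ℝ) :
    ∑ k, σ k + flat N ⬝ᵥ (flat (U * Vᵀ) + W) +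
      1 / 2 * ‖toLp 2 (flat N - tangentProj U V *ᵥ flat N)‖ ≤
        nuc (U * diagonal σ * Vᵀ + N) := by
  set G := tangentProj U V
  set R := flat N - G *ᵥ flat N with hR
  have hproj : IsStarProjection G := isStarProjection_tangentProj hU hV
  have hGR : G *ᵥ R = 0 := by
    rw [hR, mulVec_sub, mulVec_mulVec, hproj.isIdempotentElem.eq, sub_self]
  have hNR : flat N ⬝ᵥ R = ‖toLp 2 R‖ ^ 2 := by
    have hGt : Gᵀ = G := hproj.isSelfAdjoint
    have horth : (G *ᵥ flat N) ⬝ᵥ R = 0 := by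
      rw [dotProduct_comm, ← dotProduct_transpose_mulVec, hGt, hGR, dotProduct_zero]
    rw [norm_toLp_sq]
    nth_rw 2 [hR]
    rw [sub_dotProduct, horth, sub_zero]
  set X := W + (1 / 2 * ‖toLp 2 R‖⁻¹) • R with hXdef
  have hX : specNorm X ≤ 1 := by
    have hRspec : ‖toLp 2 R‖⁻¹ * specNorm R ≤ 1 :=
      (mul_le_mul_of_nonneg_left (specNorm_le_norm R) (by positivity)).trans
        inv_mul_le_one
    refine (specNorm_add_le _ _).trans ?_
    rw [specNorm_smul, abs_of_nonneg (by positivity), mul_assoc]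
    linarith
  have hX0 : G *ᵥ X = 0 := by rw [hXdef, mulVec_add, mulVec_smul, hGR, hW0]; simp
  have hnuc := dotProduct_le_nuc (U * diagonal σ * Vᵀ + N)
    (specNorm_factor_add_le_one hU hV hX hX0)
  rw [flat_add, add_dotProduct, dotProduct_factor_add hU hV hX0, hXdef, ← add_assoc (flat _),
    dotProduct_add _ (_ + W), dotProduct_smul, hNR, smul_eq_mul] at hnuc
  have hnorm : ‖toLp 2 R‖⁻¹ * ‖toLp 2 R‖ ^ 2 = ‖toLp 2 R‖ := by
    rw [sq, ← mul_assoc, inv_mul_mul_self]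
  linear_combination hnuc - 1 / 2 * hnorm

end NuclearNorm

section DualCertificate

variable {m n : Type*} [Fintype m] [Fintype n] [DecidableEq n]

/-- An approximate dual certificate: `W` lies off the range of the projection `G`, is small in
spectral norm, and `Z + W` is small off `ω` and agrees up to `ε` with `lam` times the signs on
`ω`. If `Z` is `U * Vᵀ` and `G` projects onto the tangent space, then `Z + W` is close to a common
subgradient of the nuclear norm and of `lam` times the entrywise `ℓ¹` norm. -/
structure IsDualCertificate (G : Matrix (m × n) (m × n) ℝ) (ω s : m × n → Bool) (Z : m × n → ℝ)
    (lam ε : ℝ) (W : m × n → ℝ) : Prop where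
  mulVec_eq_zero : G *ᵥ W = 0
  specNorm_le : specNorm W ≤ 1 / 2
  abs_add_le : ∀ e, ω e = false → |Z e + W e| ≤ lam / 2
  abs_add_sub_le : ∀ e, ω e → |Z e + W e - lam * boolSign (s e)| ≤ ε

variable {G : Matrix (m × n) (m × n) ℝ}

theorem IsGolfingCertificate.isDualCertificate (hG : IsIdempotentElem G)
    (hperp : ∀ X, specNorm (X - G *ᵥ X) ≤ specNorm X) {ω s : m × n → Bool} {Z Y H : m × n → ℝ}
    {a σ ε σ' ε' τ lam : ℝ} (hY : IsGolfingCertificate G ω Z a σ ε Y)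
    (hH : IsSignCertificate G ω s σ' ε' H) (hs : specNorm (signVec ω s) ≤ τ) (hlam : 0 ≤ lam)
    (hσ : σ + lam * (σ' + τ) ≤ 1 / 2) (ha : a + ε + lam * ε' ≤ lam / 2) :
    IsDualCertificate G ω s Z lam ε ((Y - G *ᵥ Y) + lam • (H - G *ᵥ H)) where
  mulVec_eq_zero := by
    have hoff (X : m × n → ℝ) : G *ᵥ (X - G *ᵥ X) = 0 := by
      rw [mulVec_sub, mulVec_mulVec, hG.eq, sub_self]
    rw [mulVec_add, mulVec_smul, hoff, hoff, smul_zero, add_zero]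
  specNorm_le := by
    have hHs : specNorm (H - G *ᵥ H) ≤ σ' + τ := by
      refine (hperp H).trans ?_
      rw [← sub_add_cancel H (signVec ω s)]
      exact (specNorm_add_le _ _).trans (add_le_add hH.specNorm_le hs)
    refine (specNorm_add_le _ _).trans ((add_le_add hY.specNorm_le ?_).trans hσ)
    rw [specNorm_smul, abs_of_nonneg hlam]
    gcongr
  abs_add_le e he := by
    have hterms : Z e + ((Y - G *ᵥ Y) + lam • (H - G *ᵥ H)) e =
        (Z e - (G *ᵥ Y) e) + Y e - lam * (G *ᵥ H) e := by
      simp only [Pi.add_apply, Pi.sub_apply, Pi.smul_apply, smul_eq_mul, hH.eq_zero e he]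
      ring
    rw [hterms]
    have hGH : |lam * (G *ᵥ H) e| ≤ lam * ε' := by
      rw [abs_mul, abs_of_nonneg hlam]
      exact mul_le_mul_of_nonneg_left (hH.abs_le e) hlam
    linarith [abs_sub (Z e - (G *ᵥ Y) e + Y e) (lam * (G *ᵥ H) e),
      abs_add_le (Z e - (G *ᵥ Y) e) (Y e), hY.abs_sub_le e, hY.abs_le e]
  abs_add_sub_le e he := by
    convert hY.abs_sub_le e using 2
    simp only [Pi.add_apply, Pi.sub_apply, Pi.smul_apply, smul_eq_mul, hH.sub_mulVec_eq e he,
      hY.eq_zero e he]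
    ring

end DualCertificate

section Recovery

variable {ι : Type*} [Fintype ι]

theorem sum_abs_le_sqrt_card_mul_norm (v : ι → ℝ) :
    ∑ e, |v e| ≤ √(Fintype.card ι) * ‖toLp 2 v‖ := by
  have h := Real.sum_mul_le_sqrt_mul_sqrt Finset.univ (fun _ => 1) fun e => |v e|
  simpa [EuclideanSpace.norm_eq] using h

theorem norm_le_sum_abs (v : ι → ℝ) : ‖toLp 2 v‖ ≤ ∑ e, |v e| := by
  rw [EuclideanSpace.norm_eq]
  exact Real.sqrt_le_iff.mpr ⟨by positivity,
    Finset.sum_sq_le_sq_sum_of_nonneg fun e _ => abs_nonneg (v e)⟩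

theorem gap_ge_of_abs_sub_le {σ γ ε lam S η ν : ℝ} (hσ : |σ| = 1) (hS : |S| = σ * S)
    (hγ : |γ - lam * σ| ≤ ε) (hlam : 0 ≤ lam) :
    -(ε * |ν|) - lam * |η| ≤ ν * γ + lam * (|S + (η - ν)| - |S|) := by
  have habs (x : ℝ) : |σ * x| = |x| := by rw [abs_mul, hσ, one_mul]
  have hsub : lam * (σ * (η - ν)) ≤ lam * (|S + (η - ν)| - |S|) := by
    refine mul_le_mul_of_nonneg_left ?_ hlam
    linarith [le_abs_self (σ * (S + (η - ν))), habs (S + (η - ν))]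
  have hη : -(lam * |η|) ≤ lam * (σ * η) := by
    rw [← mul_neg]
    exact mul_le_mul_of_nonneg_left (habs η ▸ neg_abs_le _) hlam
  have hν : -(ε * |ν|) ≤ ν * (γ - lam * σ) := by
    refine (neg_le_neg ?_).trans (neg_abs_le _)
    rw [abs_mul, mul_comm]
    gcongr
  linarith

theorem gap_ge_of_abs_le {γ κ lam η ν : ℝ} (hγ : |γ| ≤ κ) (hlam : 0 ≤ lam) :
    (lam - κ) * |ν| - lam * |η| ≤ ν * γ + lam * |η - ν| := by
  have hν : -(κ * |ν|) ≤ ν * γ := by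
    refine (neg_le_neg ?_).trans (neg_abs_le _)
    rw [abs_mul, mul_comm]
    gcongr
  have hη : lam * (|ν| - |η|) ≤ lam * |η - ν| :=
    mul_le_mul_of_nonneg_left ((abs_sub_abs_le_abs_sub ν η).trans_eq (abs_sub_comm ν η)) hlam
  linarith

variable [DecidableEq ι]

theorem mask_mulVec_apply (b : ι → Bool) (x : ι → ℝ) (e : ι) :
    (mask b *ᵥ x) e = if b e then x e else 0 := by
  simp [mask, mulVec_diagonal]

theorem norm_sq_eq_mask_add (b : ι → Bool) (x : ι → ℝ) :
    ‖toLp 2 x‖ ^ 2 = ‖toLp 2 (mask b *ᵥ x)‖ ^ 2 + ‖toLp 2 (x - mask b *ᵥ x)‖ ^ 2 := by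
  simp only [norm_toLp_sq, dotProduct, ← Finset.sum_add_distrib, Pi.sub_apply, mask_mulVec_apply]
  refine Finset.sum_congr rfl fun e _ => ?_
  split_ifs <;> simp

theorem norm_mask_mulVec_le_add {G : Matrix ι ι ℝ} {ω : ι → Bool} (hω : ‖mask ω * G‖ ≤ 1 / 2)
    (x : ι → ℝ) :
    ‖toLp 2 (mask ω *ᵥ x)‖ ≤ ‖toLp 2 (x - mask ω *ᵥ x)‖ + 2 * ‖toLp 2 (x - G *ᵥ x)‖ := by
  have hsplit : ‖toLp 2 (mask ω *ᵥ x)‖ ≤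
      ‖toLp 2 ((mask ω * G) *ᵥ x)‖ + ‖toLp 2 (mask ω *ᵥ (x - G *ᵥ x))‖ := by
    refine le_of_eq_of_le ?_ (norm_add_le _ _)
    rw [← WithLp.toLp_add, ← mulVec_mulVec, ← mulVec_add, add_sub_cancel]
  have hrange : ‖toLp 2 ((mask ω * G) *ᵥ x)‖ ≤ 1 / 2 * ‖toLp 2 x‖ :=
    (l2_opNorm_mulVec (mask ω * G) (toLp 2 x)).trans (by gcongr)
  have hmask : ‖toLp 2 (mask ω *ᵥ (x - G *ᵥ x))‖ ≤ ‖toLp 2 (x - G *ᵥ x)‖ :=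
    (l2_opNorm_mulVec (mask ω) (toLp 2 (x - G *ᵥ x))).trans
      (mul_le_of_le_one_left (norm_nonneg _) (isStarProjection_mask ω).norm_le)
  have hx : ‖toLp 2 x‖ ≤ ‖toLp 2 (mask ω *ᵥ x)‖ + ‖toLp 2 (x - mask ω *ᵥ x)‖ := by
    refine le_of_eq_of_le ?_ (norm_add_le _ _)
    rw [← WithLp.toLp_add, add_sub_cancel]
  linarith

theorem gap_ge_of_dual {ω s : ι → Bool} {Γ S : ι → ℝ} {lam ε : ℝ} (hlam : 0 ≤ lam)
    (hΓoff : ∀ e, ω e = false → |Γ e| ≤ lam / 2)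
    (hΓon : ∀ e, ω e → |Γ e - lam * boolSign (s e)| ≤ ε)
    (hS : ∀ e, |S e| = signVec ω s e * S e) (N E : ι → ℝ) :
    lam / 2 * ∑ e, |(N - mask ω *ᵥ N) e| - ε * ∑ e, |(mask ω *ᵥ N) e| - lam * ∑ e, |E e| ≤
      N ⬝ᵥ Γ + lam * ∑ e, (|S e + (E e - N e)| - |S e|) := by
  simp only [dotProduct, Finset.mul_sum, ← Finset.sum_sub_distrib, ← Finset.sum_add_distrib]
  refine Finset.sum_le_sum fun e _ => ?_
  have hSe := hS e
  rw [signVec] at hSe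
  rw [Pi.sub_apply, mask_mulVec_apply]
  cases hωe : ω e with
  | true =>
    have hsign : |boolSign (s e)| = 1 := by unfold boolSign; split_ifs <;> simp
    simp only [hωe, if_true] at hSe
    simpa using gap_ge_of_abs_sub_le hsign hSe (hΓon e hωe) hlam
  | false =>
    have hS0 : S e = 0 := by simpa [hωe] using hSe
    have hgap := gap_ge_of_abs_le (η := E e) (ν := N e) (hΓoff e hωe) hlam
    simp only [hS0, Bool.false_eq_true, if_false, abs_zero, zero_add, sub_zero, mul_zero]
    linarith

theorem sq_add_sq_le_of_gap {a b P x y β δ : ℝ} (ha : 0 ≤ a) (hb : 0 ≤ b) (hP : 0 ≤ P) (hx : 0 ≤ x)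
    (hy : 0 ≤ y) (hδ : 0 ≤ δ) (hδβ : δ ≤ β) (hgap : a + b / 2 - P / 8 ≤ 2 * β)
    (hPab : P ≤ b + 2 * a) (hxx : x ^ 2 = P ^ 2 + b ^ 2) (hyx : y ≤ x + 2 * δ) :
    x ^ 2 + y ^ 2 ≤ 320 * β ^ 2 + 4 * δ ^ 2 := by
  have hab : b + 2 * a ≤ 16 / 3 * β := by linarith
  have hx2 : x ^ 2 ≤ (8 * β) ^ 2 := by nlinarith
  have hx8 : x ≤ 8 * β := (sq_le_sq₀ hx (by linarith)).mp hx2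
  have hP2 : P ^ 2 ≤ (16 / 3 * β) ^ 2 := by gcongr; linarith
  have hb2 : b ^ 2 ≤ (16 / 3 * β) ^ 2 := by gcongr; linarith
  have hy2 : y ^ 2 ≤ (x + 2 * δ) ^ 2 := by gcongr
  nlinarith [mul_le_mul hx8 hδβ hδ (by linarith)]

theorem norm_sq_add_norm_sq_le_of_gap [Nonempty ι] {G : Matrix ι ι ℝ} {ω s : ι → Bool}
    (hω : ‖mask ω * G‖ ≤ 1 / 2) {Γ S N E : ι → ℝ} {lam ε δ : ℝ} (hlam : 0 < lam)
    (hlam2 : lam ≤ 1 / 2) (hε0 : 0 ≤ ε) (hε : ε * √(Fintype.card ι) ≤ lam / 8)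
    (hΓoff : ∀ e, ω e = false → |Γ e| ≤ lam / 2)
    (hΓon : ∀ e, ω e → |Γ e - lam * boolSign (s e)| ≤ ε)
    (hS : ∀ e, |S e| = signVec ω s e * S e) (hE : ‖toLp 2 E‖ ≤ 2 * δ)
    (hgap : N ⬝ᵥ Γ + 1 / 2 * ‖toLp 2 (N - G *ᵥ N)‖ + lam * ∑ e, (|S e + (E e - N e)| - |S e|) ≤ 0) :
    ‖toLp 2 N‖ ^ 2 + ‖toLp 2 (E - N)‖ ^ 2 ≤ (320 * Fintype.card ι + 4) * δ ^ 2 := by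
  have hδ : 0 ≤ δ := by linarith [norm_nonneg (toLp 2 E)]
  set κ := √(Fintype.card ι) with hκ
  have hκ1 : 1 ≤ κ := Real.one_le_sqrt.mpr (by exact_mod_cast Fintype.card_pos)
  set a := ‖toLp 2 (N - G *ᵥ N)‖
  set b := ‖toLp 2 (N - mask ω *ᵥ N)‖
  set P := ‖toLp 2 (mask ω *ᵥ N)‖
  have hoff : lam / 2 * b ≤ lam / 2 * ∑ e, |(N - mask ω *ᵥ N) e| := by
    gcongr
    exact norm_le_sum_abs _
  have hon : ε * ∑ e, |(mask ω *ᵥ N) e| ≤ lam / 8 * P := calc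
    _ ≤ ε * (κ * P) := by gcongr; exact sum_abs_le_sqrt_card_mul_norm _
    _ = ε * κ * P := by ring
    _ ≤ lam / 8 * P := by gcongr
  have hnoise : lam * ∑ e, |E e| ≤ lam * (κ * (2 * δ)) := by
    gcongr
    exact (sum_abs_le_sqrt_card_mul_norm E).trans (by gcongr)
  have ha : lam * a ≤ 1 / 2 * a := by gcongr
  have hscaled : lam * (a + b / 2 - P / 8) ≤ lam * (2 * (κ * δ)) := by
    linarith [gap_ge_of_dual hlam.le hΓoff hΓon hS N E]
  have hEN : ‖toLp 2 (E - N)‖ ≤ ‖toLp 2 N‖ + 2 * δ := by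
    rw [WithLp.toLp_sub]
    linarith [norm_sub_le (toLp 2 E) (toLp 2 N)]
  refine (sq_add_sq_le_of_gap (norm_nonneg _) (norm_nonneg _) (norm_nonneg _) (norm_nonneg _)
    (norm_nonneg _) hδ (le_mul_of_one_le_left hδ hκ1) (le_of_mul_le_mul_left hscaled hlam)
    (norm_mask_mulVec_le_add hω N) (norm_sq_eq_mask_add ω N) hEN).trans_eq ?_
  rw [mul_pow, hκ, Real.sq_sqrt (by positivity)]
  ring

end Recovery

section StablePCP

variable {n1 n2 r : ℕ} {U : Matrix (Fin n1) (Fin r) ℝ} {V : Matrix (Fin n2) (Fin r) ℝ}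

theorem IsStablePCPMin.norm_sub_le {L0 S0 Z0 Lh Sh : Matrix (Fin n1) (Fin n2) ℝ} {lam δ : ℝ}
    (hmin : IsStablePCPMin (L0 + S0 + Z0) lam δ Lh Sh) (hZ : frob Z0 ≤ δ) :
    ‖toLp 2 (flat (Lh + Sh - (L0 + S0)))‖ ≤ 2 * δ := by
  have hsplit : flat (Lh + Sh - (L0 + S0)) = flat (Lh + Sh - (L0 + S0 + Z0)) + flat Z0 := by
    rw [← flat_add, sub_add, add_sub_cancel_right]
  rw [hsplit, WithLp.toLp_add]
  refine (norm_add_le _ _).trans ?_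
  rw [← frob_eq_norm, ← frob_eq_norm]
  linarith [hmin.1]

theorem IsStablePCPMin.objective_le {L0 S0 Z0 Lh Sh : Matrix (Fin n1) (Fin n2) ℝ} {lam δ : ℝ}
    (hmin : IsStablePCPMin (L0 + S0 + Z0) lam δ Lh Sh) (hZ : frob Z0 ≤ δ) :
    nuc Lh + lam * l1norm Sh ≤ nuc L0 + lam * l1norm S0 := by
  refine hmin.2 L0 S0 ?_
  rw [sub_add_cancel_left]
  simpa [frob] using hZ

theorem IsDualCertificate.gap_le {σ : Fin r → ℝ} {ω s : Fin n1 × Fin n2 → Bool}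
    {W : Fin n1 × Fin n2 → ℝ} {lam ε : ℝ} (hU : Uᵀ * U = 1) (hV : Vᵀ * V = 1) (hσ : ∀ k, 0 ≤ σ k)
    (hW : IsDualCertificate (tangentProj U V) ω s (flat (U * Vᵀ)) lam ε W)
    {S0 Lh Sh : Matrix (Fin n1) (Fin n2) ℝ}
    (hobj : nuc Lh + lam * l1norm Sh ≤ nuc (U * diagonal σ * Vᵀ) + lam * l1norm S0) :
    flat (Lh - U * diagonal σ * Vᵀ) ⬝ᵥ (flat (U * Vᵀ) + W) +
      1 / 2 * ‖toLp 2 (flat (Lh - U * diagonal σ * Vᵀ) -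
        tangentProj U V *ᵥ flat (Lh - U * diagonal σ * Vᵀ))‖ +
      lam * ∑ e, (|flat Sh e| - |flat S0 e|) ≤ 0 := by
  have hnuc := add_dotProduct_add_norm_le_nuc (σ := σ) hU hV hW.mulVec_eq_zero hW.specNorm_le
    (Lh - U * diagonal σ * Vᵀ)
  rw [add_sub_cancel] at hnuc
  rw [Finset.sum_sub_distrib, ← l1norm_eq_sum, ← l1norm_eq_sum]
  linarith [nuc_mul_diagonal_mul_transpose_le hU hV hσ]

theorem IsDualCertificate.pairDist_le [Nonempty (Fin n1 × Fin n2)] (hU : Uᵀ * U = 1)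
    (hV : Vᵀ * V = 1) {σ : Fin r → ℝ} (hσ : ∀ k, 0 ≤ σ k) {ω s : Fin n1 × Fin n2 → Bool}
    (hω : ‖mask ω * tangentProj U V‖ ≤ 1 / 2) {W : Fin n1 × Fin n2 → ℝ} {lam ε : ℝ}
    (hW : IsDualCertificate (tangentProj U V) ω s (flat (U * Vᵀ)) lam ε W) (hlam : 0 < lam)
    (hlam2 : lam ≤ 1 / 2) (hε0 : 0 ≤ ε) (hε : ε * √(n1 * n2) ≤ lam / 8)
    {S0 : Matrix (Fin n1) (Fin n2) ℝ} (hS0 : ∀ e, |flat S0 e| = signVec ω s e * flat S0 e)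
    {δ : ℝ} {Z0 Lh Sh : Matrix (Fin n1) (Fin n2) ℝ} (hZ : frob Z0 ≤ δ)
    (hmin : IsStablePCPMin (U * diagonal σ * Vᵀ + S0 + Z0) lam δ Lh Sh) :
    pairDist Lh Sh (U * diagonal σ * Vᵀ) S0 ≤ √(320 * n1 * n2 + 4) * δ := by
  set L0 := U * diagonal σ * Vᵀ
  have hδ : 0 ≤ δ := (Real.sqrt_nonneg _).trans hZ
  have hcard : (Fintype.card (Fin n1 × Fin n2) : ℝ) = n1 * n2 := by simp
  have hSh : ∀ e, flat S0 e + (flat (Lh + Sh - (L0 + S0)) e - flat (Lh - L0) e) = flat Sh e :=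
    fun e => by simp only [flat_apply, Matrix.sub_apply, Matrix.add_apply]; ring
  have hdiff : flat (Lh + Sh - (L0 + S0)) - flat (Lh - L0) = flat (Sh - S0) := by
    rw [← flat_sub]
    congr 1
    abel
  have hfin := norm_sq_add_norm_sq_le_of_gap (N := flat (Lh - L0)) (Γ := flat (U * Vᵀ) + W) hω hlam
    hlam2 hε0 (by rwa [hcard]) hW.abs_add_le hW.abs_add_sub_le hS0 (hmin.norm_sub_le hZ)
    (by simpa only [hSh] using hW.gap_le hU hV hσ (hmin.objective_le hZ))
  rw [hdiff, ← frob_eq_norm, ← frob_eq_norm, hcard, ← mul_assoc] at hfin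
  refine (Real.sqrt_le_sqrt hfin).trans_eq ?_
  rw [Real.sqrt_mul (by positivity), Real.sqrt_sq hδ]

end StablePCP

section BinomialMode

variable {N : ℕ} {x : unitInterval}

theorem bernstein_succ_mul {k : ℕ} (hk : k < N) :
    bernstein N (k + 1) x * ((k + 1) * (1 - x)) = bernstein N k x * ((N - k) * x) := by
  have hchoose : (N.choose (k + 1) : ℝ) * (k + 1) = N.choose k * (N - k) := by
    rw [← Nat.cast_sub hk.le]
    exact_mod_cast Nat.choose_succ_right_eq N k
  have hsub : N - k = (N - (k + 1)) + 1 := by omega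
  rw [bernstein_apply, bernstein_apply, hsub, pow_succ (x : ℝ), pow_succ (1 - x : ℝ)]
  linear_combination ((x : ℝ) ^ k * x * (1 - x) ^ (N - (k + 1)) * (1 - x)) * hchoose

theorem bernstein_le_succ {m k : ℕ} (hx : N * (x : ℝ) = m) (hx1 : (x : ℝ) < 1) (hk : k < m) :
    bernstein N k x ≤ bernstein N (k + 1) x := by
  have hx0 := x.2.1
  have hmN : (m : ℝ) ≤ N := hx ▸ mul_le_of_le_one_right (Nat.cast_nonneg N) hx1.le
  have hkm : (k : ℝ) + 1 ≤ m := by exact_mod_cast hk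
  have hpos : 0 < ((k : ℝ) + 1) * (1 - x) := mul_pos (by positivity) (by linarith)
  refine le_of_mul_le_mul_right ?_ hpos
  rw [bernstein_succ_mul (hk.trans_le (by exact_mod_cast hmN))]
  exact mul_le_mul_of_nonneg_left (by nlinarith) bernstein_nonneg

theorem bernstein_succ_le {m k : ℕ} (hx : N * (x : ℝ) = m) (hx1 : (x : ℝ) < 1) (hk : m ≤ k) :
    bernstein N (k + 1) x ≤ bernstein N k x := by
  have hx0 := x.2.1
  rcases lt_or_ge k N with hkN | hNk
  · have hmk : (m : ℝ) ≤ k := by exact_mod_cast hk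
    have hpos : 0 < ((k : ℝ) + 1) * (1 - x) := mul_pos (by positivity) (by linarith)
    refine le_of_mul_le_mul_right ?_ hpos
    rw [bernstein_succ_mul hkN]
    exact mul_le_mul_of_nonneg_left (by nlinarith) bernstein_nonneg
  · have hzero : bernstein N (k + 1) x = 0 := by
      rw [bernstein_apply, Nat.choose_eq_zero_of_lt (by omega)]
      simp
    exact hzero.trans_le bernstein_nonneg

theorem bernstein_le_mode {m : ℕ} (hx : N * (x : ℝ) = m) (hx1 : (x : ℝ) < 1) (k : ℕ) :
    bernstein N k x ≤ bernstein N m x := by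
  rcases le_total k m with hkm | hmk
  · induction hkm using Nat.decreasingInduction with
    | of_succ j hj ih => exact (bernstein_le_succ hx hx1 hj).trans ih
    | self => rfl
  · induction k, hmk using Nat.le_induction with
    | base => rfl
    | succ k hk ih => exact (bernstein_succ_le hx hx1 hk).trans ih

theorem one_le_succ_mul_bernstein_mode {m : ℕ} (hx : N * (x : ℝ) = m) (hx1 : (x : ℝ) < 1) :
    1 ≤ (N + 1) * bernstein N m x := calc
  1 = ∑ k : Fin (N + 1), bernstein N k x := (bernstein.probability N x).symm
  _ ≤ ∑ _k : Fin (N + 1), bernstein N m x :=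
    Finset.sum_le_sum fun k _ => bernstein_le_mode hx hx1 k
  _ = (N + 1) * bernstein N m x := by simp

end BinomialMode

section Transfer

theorem one_sub_mul_measureReal_le_unifProb {α β : Type*} [Fintype α] [Nonempty α]
    [MeasurableSpace β] [MeasurableSingletonClass β] {P : Measure β} [IsFiniteMeasure P]
    {φ : α → β} (hφ : Function.Injective φ) {C : ℝ} (hC : 0 ≤ C)
    (hP : ∀ a, 1 ≤ C * Fintype.card α * P.real {φ a}) (Q : β → Prop) :
    1 - C * P.real {x | ¬Q x} ≤ unifProb fun a => Q (φ a) := by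
  classical
  set bad : Finset α := {a | ¬Q (φ a)}
  have hsplit : ((Finset.univ.filter fun a => Q (φ a)).card : ℝ) + bad.card = Fintype.card α := by
    exact_mod_cast Finset.card_filter_add_card_filter_not (s := Finset.univ) fun a => Q (φ a)
  have hcard : (0 : ℝ) < Fintype.card α := by exact_mod_cast Fintype.card_pos
  have hmass : ∑ a ∈ bad, P.real {φ a} ≤ P.real {x | ¬Q x} := by
    rw [← Finset.sum_image (f := fun x => P.real {x}) hφ.injOn, sum_measureReal_singleton]
    refine measureReal_mono fun x hx => ?_
    obtain ⟨a, ha, rfl⟩ := Finset.mem_image.mp hx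
    exact (Finset.mem_filter.mp ha).2
  have hbadle : (bad.card : ℝ) ≤ C * Fintype.card α * P.real {x | ¬Q x} := calc
    (bad.card : ℝ) = ∑ _a ∈ bad, 1 := by simp
    _ ≤ ∑ a ∈ bad, C * Fintype.card α * P.real {φ a} := Finset.sum_le_sum fun a _ => hP a
    _ ≤ C * Fintype.card α * P.real {x | ¬Q x} := by
      rw [← Finset.mul_sum]
      gcongr
  rw [unifProb, le_div_iff₀ hcard]
  have hgood : ((Finset.univ.filter fun a => Q (φ a)).card : ℝ) =
    Fintype.card α - bad.card := by linarith
  convert (show (1 - C * P.real {x | ¬Q x}) * Fintype.card α ≤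
    ((Finset.univ.filter fun a => Q (φ a)).card : ℝ) by linarith)

theorem bernoulliProduct_real_singleton_decide_mem {ι : Type*} [Fintype ι] [DecidableEq ι]
    (p : unitInterval) (A : Finset ι) :
    (bernoulliProduct ι p).real {fun e => decide (e ∈ A)} =
      (p : ℝ) ^ A.card * (1 - p) ^ (Fintype.card ι - A.card) := by
  simp only [bernoulliProduct_real_singleton, decide_eq_true_eq]
  rw [Finset.prod_ite, Finset.prod_const, Finset.prod_const, Finset.filter_univ_mem,
    Finset.filter_not, Finset.filter_univ_mem, ← Finset.compl_eq_univ_sdiff, Finset.card_compl]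

theorem uniformSigns_real_singleton {ι : Type*} [Fintype ι] (s : ι → Bool) :
    (uniformSigns ι).real {s} = (2 ^ Fintype.card ι)⁻¹ := by
  rw [bernoulliProduct_real_singleton, ← inv_pow, ← Finset.card_univ, ← Finset.prod_const]
  refine Finset.prod_congr rfl fun e _ => ?_
  split_ifs <;> norm_num

/-- The loss `n1 * n2 + 1` is the inverse of the probability that the Bernoulli support has its
most likely size `m`. -/
theorem one_sub_mul_measureReal_bernoulli_le_unifProb {n1 n2 m : ℕ} (hm : m < n1 * n2)
    {ρ : unitInterval} (hρ : (n1 * n2 : ℝ) * ρ = m)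
    (Q : (Fin n1 × Fin n2 → Bool) × (Fin n1 × Fin n2 → Bool) → Prop) :
    1 - (n1 * n2 + 1) * ((bernoulliProduct (Fin n1 × Fin n2) ρ).prod
        (uniformSigns (Fin n1 × Fin n2))).real {x | ¬Q x} ≤
      unifProb fun ω : SampleSpace n1 n2 m => Q (fun e => decide (e ∈ ω.1.1), ω.2) := by
  have hN : Fintype.card (Fin n1 × Fin n2) = n1 * n2 := by simp
  have hcard : Fintype.card (SampleSpace n1 n2 m) = (n1 * n2).choose m * 2 ^ (n1 * n2) := by
    rw [Fintype.card_prod, Fintype.card_finset_len, Fintype.card_fun, Fintype.card_bool, hN]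
  have : Nonempty (SampleSpace n1 n2 m) := by
    rw [← Fintype.card_pos_iff, hcard]
    exact Nat.mul_pos (Nat.choose_pos hm.le) (by positivity)
  have hρN : ((n1 * n2 : ℕ) : ℝ) * ρ = m := by exact_mod_cast hρ
  have hρ1 : (ρ : ℝ) < 1 := by
    have hmR : (m : ℝ) < (n1 * n2 : ℕ) := by exact_mod_cast hm
    nlinarith
  refine one_sub_mul_measureReal_le_unifProb
    (φ := fun ω : SampleSpace n1 n2 m => (fun e => decide (e ∈ ω.1.1), ω.2)) ?_ (by positivity)
    (fun ω => ?_) Q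
  · rintro ⟨⟨A, _⟩, s⟩ ⟨⟨B, _⟩, t⟩ h
    obtain ⟨hAB, rfl⟩ := Prod.mk.inj h
    obtain rfl : A = B := by
      ext e
      simpa using congrFun hAB e
    rfl
  · rw [← Set.singleton_prod_singleton, measureReal_prod_prod,
      bernoulliProduct_real_singleton_decide_mem, uniformSigns_real_singleton, ω.1.2, hN, hcard]
    refine (one_le_succ_mul_bernstein_mode hρN hρ1).trans_eq ?_
    rw [bernstein_apply]
    push_cast
    field

end Transfer

section CertificateProbability

/-- A density of the random support that is small enough for all failure estimates. Here
`1 / 18432 = (1 / 8) ^ 2 / 288` is the largest subgaussian proxy for which the spectral tail bound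
gives a sign matrix of norm at most `1 / 8 * √n1`. -/
noncomputable def maxDensity : ℝ := min (1 / 10 ^ 7) (1 / 18432 * Real.exp (-(2 / (1 / 18432) ^ 2)))

theorem maxDensity_pos : 0 < maxDensity := by
  unfold maxDensity
  positivity

variable {m n : Type*} [Fintype m] [Fintype n] [DecidableEq n]

theorem measureReal_lt_specNorm_signVec_le (hcard : Fintype.card n ≤ Fintype.card m)
    {ρ : unitInterval} (hρ : ρ ≤ maxDensity) :
    ((bernoulliProduct (m × n) ρ).prod (uniformSigns (m × n))).real
        {x | 1 / 8 * √(Fintype.card m) < specNorm (signVec x.1 x.2)} ≤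
      Real.exp (-Fintype.card m) := by
  refine (isSubgaussianVector_signVec_prod ρ (c := 1 / 18432) (by positivity)
    ?_).measureReal_lt_specNorm_le (by positivity) (by norm_num) hcard
  push_cast
  rw [← le_div_iff₀ (Real.exp_pos _), div_eq_mul_inv, ← Real.exp_neg]
  exact hρ.trans (min_le_right _ _)

variable [DecidableEq m]

/-- A support-and-sign pattern that makes stable recovery possible: the coordinate projection onto
the support contracts the range of `G`, and there is an approximate dual certificate. -/
def HasDualCertificate (G : Matrix (m × n) (m × n) ℝ) (Z : m × n → ℝ) (lam ε : ℝ)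
    (x : (m × n → Bool) × (m × n → Bool)) : Prop :=
  ‖mask x.1 * G‖ ≤ 1 / 2 ∧ ∃ W, IsDualCertificate G x.1 x.2 Z lam ε W

variable {G : Matrix (m × n) (m × n) ℝ} {Z : m × n → ℝ}

theorem hasDualCertificate_of_certificates (hG : IsIdempotentElem G)
    (hperp : ∀ X, specNorm (X - G *ᵥ X) ≤ specNorm X) {a σ ε lam : ℝ} (hlam : 0 ≤ lam)
    (hlam1 : lam * √(Fintype.card m) ≤ 1) (ha : a ≤ lam / 8) (hσ : σ ≤ 1 / 4) (hε : ε ≤ lam / 8)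
    {x : (m × n → Bool) × (m × n → Bool)} (hmask : ‖mask x.1 * G‖ ≤ 1 / 2)
    (hsign : specNorm (signVec x.1 x.2) ≤ 1 / 8 * √(Fintype.card m))
    (hY : ∃ Y, IsGolfingCertificate G x.1 Z a σ ε Y)
    (hH : ∃ H, IsSignCertificate G x.1 x.2 (1 / 8 * √(Fintype.card m)) (1 / 4) H) :
    HasDualCertificate G Z lam ε x := by
  obtain ⟨Y, hY⟩ := hY
  obtain ⟨H, hH⟩ := hH
  exact ⟨hmask, _, hY.isDualCertificate hG hperp hH hsign hlam (by linarith) (by linarith)⟩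

/-- A bound for the probability that a Bernoulli support of density `ρ` with random signs has no
dual certificate, summing the failures of the contraction, the golfing scheme with `K` batches of
density `q`, the spectral bound for the sign matrix, and the sign certificate. The matrix has `n`
rows and `N` entries, and `μ` is the coherence of the tangent space. -/
noncomputable def failureBound (K : ℕ) (n N ρ q μ : ℝ) : ℝ :=
  ((4 * ρ + (K + 1) * μ) / (1 / 400) ^ 2) ^ K * N +
    K * (N * (2 * Real.exp (-(q / (16 * μ)))) + Real.exp (-n)) + Real.exp (-n) +
      (Real.exp (-n) + N * (2 * Real.exp (-(1 / (128 * μ)))))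

theorem measureReal_mem_or_not_exists_isSignCertificate_le (hG : IsStarProjection G) {μ : ℝ}
    (hμ : ∀ e, G e e ≤ μ) (hμ0 : 0 < μ) (hcard : Fintype.card n ≤ Fintype.card m)
    (ρ : unitInterval) {B : Set (m × n → Bool)} (hB : ∀ ω ∉ B, ‖mask ω * G‖ ≤ 1 / 400) :
    ((bernoulliProduct (m × n) ρ).prod (uniformSigns (m × n))).real {x | x.1 ∈ B ∨
        ¬∃ H, IsSignCertificate G x.1 x.2 (1 / 8 * √(Fintype.card m)) (1 / 4) H} ≤
      (bernoulliProduct (m × n) ρ).real B + (Real.exp (-Fintype.card m) +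
        Fintype.card m * Fintype.card n * (2 * Real.exp (-(1 / (128 * μ))))) := by
  refine measureReal_prod_le_of_fiber .of_discrete .of_discrete (by positivity) fun ω hω => ?_
  refine le_trans (measureReal_mono fun s hs => ?_)
    (measureReal_not_exists_isSignCertificate_le hG hμ hμ0 hcard ω (hB ω hω))
  exact hs.resolve_left hω

theorem measureReal_not_hasDualCertificate_le (hG : IsStarProjection G)
    (hperp : ∀ X, specNorm (X - G *ᵥ X) ≤ specNorm X) (hGZ : G *ᵥ Z = Z) {μ : ℝ}
    (hμ : ∀ e, G e e ≤ μ) (hμ0 : 0 < μ) (hcard : Fintype.card n ≤ Fintype.card m) {z : ℝ}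
    (hz : 0 < z) (hZ : ∀ e, |Z e| ≤ z) (p : unitInterval) {q ρ : unitInterval} (hq : q ≠ 0) {K : ℕ}
    (hK : K ≠ 0) (hρ : p * unitInterval.symm q ^ K = ρ) (hρmax : ρ ≤ maxDensity) {lam : ℝ}
    (hlam : 0 ≤ lam) (hlam1 : lam * √(Fintype.card m) ≤ 1) (hzq : 2 * (z / q) ≤ lam / 8)
    (hzs : 34 * (z / q) * √(Fintype.card m) ≤ 1 / 4) (hzK : z / 2 ^ K ≤ lam / 8) :
    ((bernoulliProduct (m × n) ρ).prod (uniformSigns (m × n))).real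
        {x | ¬HasDualCertificate G Z lam (z / 2 ^ K) x} ≤
      failureBound K (Fintype.card m) (Fintype.card m * Fintype.card n) ρ q μ := by
  set A := {x : (m × n → Bool) × (m × n → Bool) |
    1 / 8 * √(Fintype.card m) < specNorm (signVec x.1 x.2)}
  set B₁ := {ω : m × n → Bool | 1 / 400 < ‖mask ω * G‖}
  set B₂ := {ω : m × n → Bool | ¬∃ Y, IsGolfingCertificate G ω Z (2 * (z / q))
    (34 * (z / q) * √(Fintype.card m)) (z / 2 ^ K) Y}
  have hsub : {x | ¬HasDualCertificate G Z lam (z / 2 ^ K) x} ⊆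
      {x | x.1 ∈ B₁ ∪ B₂ ∨
        ¬∃ H, IsSignCertificate G x.1 x.2 (1 / 8 * √(Fintype.card m)) (1 / 4) H} ∪ A := by
    intro x hx
    by_contra hgood
    simp only [A, B₁, B₂, Set.mem_union, Set.mem_ofPred_eq, not_or, not_lt, not_not] at hgood
    obtain ⟨⟨⟨hmask, hY⟩, hH⟩, hsign⟩ := hgood
    exact hx (hasDualCertificate_of_certificates hG.isIdempotentElem hperp hlam hlam1 hzq hzs hzK
      (hmask.trans (by norm_num)) hsign hY hH)
  have hsign := measureReal_mem_or_not_exists_isSignCertificate_le hG hμ hμ0 hcard ρ (B := B₁ ∪ B₂)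
    fun ω hω => not_lt.mp fun h => hω (Or.inl h)
  have hcontraction := measureReal_lt_l2_opNorm_mask_mul_le hG hμ hμ0.le ρ hK
    (c := 1 / 400) (by norm_num)
  have hgolfing := measureReal_not_exists_isGolfingCertificate_le hperp hG hμ hμ0 hq hcard p K hz
    hGZ hZ
  rw [hρ] at hgolfing
  rw [Fintype.card_prod, Nat.cast_mul] at hcontraction
  refine (measureReal_mono hsub).trans ((measureReal_union_le _ _).trans ?_)
  rw [failureBound]
  linarith [measureReal_union_le (μ := bernoulliProduct (m × n) ρ) B₁ B₂,
    measureReal_lt_specNorm_signVec_le (m := m) (n := n) hcard hρmax]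

end CertificateProbability

section FailureEstimates

theorem exp_neg_le_inv_pow {n x : ℝ} {k : ℕ} (hn : 0 < n) (hx : k * Real.log n ≤ x) :
    Real.exp (-x) ≤ (n ^ k)⁻¹ := by
  rw [Real.exp_neg, ← Real.exp_log (pow_pos hn k), Real.log_pow]
  gcongr

theorem exp_neg_le_factorial_mul_inv_pow {x : ℝ} (hx : 0 < x) (k : ℕ) :
    Real.exp (-x) ≤ k.factorial * (x ^ k)⁻¹ := by
  have h := Real.pow_div_factorial_le_exp x hx.le k
  rw [div_le_iff₀ (by positivity)] at h
  rw [Real.exp_neg, ← div_eq_mul_inv, inv_eq_one_div, div_le_div_iff₀ (Real.exp_pos _)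
    (by positivity)]
  linarith

theorem le_two_pow_of_two_mul_log_le {n : ℝ} {k : ℕ} (hn : 0 < n) (hk : 2 * Real.log n ≤ k) :
    n ≤ 2 ^ k := by
  rw [← Real.log_le_log_iff hn (by positivity), Real.log_pow]
  nlinarith [Real.log_two_gt_d9, (Nat.cast_nonneg k : (0 : ℝ) ≤ k)]

theorem exists_mul_symm_pow_eq {K : ℕ} (hK : K ≠ 0) {ρ : unitInterval} (hρ : (ρ : ℝ) ≤ 1 / 2) :
    ∃ p q : unitInterval, (q : ℝ) = 1 / (2 * K) ∧ p * unitInterval.symm q ^ K = ρ := by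
  have hK1 : (1 : ℝ) ≤ K := by exact_mod_cast Nat.one_le_iff_ne_zero.mpr hK
  have hq1 : 1 / (2 * (K : ℝ)) ≤ 1 := by
    rw [div_le_one (by positivity)]
    linarith
  have hpow : 1 / 2 ≤ (1 - 1 / (2 * (K : ℝ))) ^ K := by
    have hbernoulli := one_add_mul_le_pow (a := -(1 / (2 * (K : ℝ)))) (by linarith) K
    have hhalf : (K : ℝ) * (1 / (2 * K)) = 1 / 2 := by field
    rw [← sub_eq_add_neg] at hbernoulli
    linarith
  have hpow0 : 0 < (1 - 1 / (2 * (K : ℝ))) ^ K := by linarith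
  refine ⟨⟨ρ / (1 - 1 / (2 * K)) ^ K, div_nonneg ρ.2.1 hpow0.le, ?_⟩,
    ⟨1 / (2 * K), by positivity, hq1⟩, rfl, Subtype.ext ?_⟩
  · rw [div_le_one hpow0]
    linarith
  · simpa using div_mul_cancel₀ (ρ : ℝ) hpow0.ne'

variable {n N ρ s : ℝ} {K : ℕ}

theorem failureBound_le {q μ C : ℝ} (hn : 1 ≤ n) (hN0 : 0 ≤ N) (hN : N ≤ n ^ 2) (hK : K ≤ 21 * n)
    (hC : 1 ≤ C) (htrace : ((4 * ρ + (K + 1) * μ) / (1 / 400) ^ 2) ^ K ≤ (n ^ 20)⁻¹)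
    (hgolf : Real.exp (-(q / (16 * μ))) ≤ (n ^ 20)⁻¹)
    (hsign : Real.exp (-(1 / (128 * μ))) ≤ (n ^ 20)⁻¹) (hexp : Real.exp (-n) ≤ C * (n ^ 20)⁻¹) :
    failureBound K n N ρ q μ ≤ 68 * C * (n ^ 17)⁻¹ := by
  set y := (n ^ 20)⁻¹ with hy
  have hCy : y ≤ C * y := le_mul_of_one_le_left (by positivity) hC
  have hn13 : n * (C * y) ≤ n ^ 3 * (C * y) := by
    gcongr
    exact le_self_pow₀ hn (by norm_num)
  have hn23 : n ^ 2 * y ≤ n ^ 3 * (C * y) := by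
    gcongr
    norm_num
  have hn03 : C * y ≤ n ^ 3 * (C * y) := le_mul_of_one_le_left (by positivity) (one_le_pow₀ hn)
  calc failureBound K n N ρ q μ
    _ ≤ y * n ^ 2 + 21 * n * (n ^ 2 * (2 * y) + C * y) + C * y + (C * y + n ^ 2 * (2 * y)) := by
      rw [failureBound]
      gcongr
    _ = n ^ 2 * y + 42 * (n ^ 3 * y) + 21 * (n * (C * y)) + 2 * (C * y) + 2 * (n ^ 2 * y) := by ring
    _ ≤ 68 * (n ^ 3 * (C * y)) := by
      have hn33 : n ^ 3 * y ≤ n ^ 3 * (C * y) := by gcongr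
      linarith
    _ = 68 * C * (n ^ 17)⁻¹ := by
      rw [hy]
      field

theorem trace_failure_le (hn : 0 < n) (hlog : 20 * Real.log n ≤ K) (hs : 0 ≤ s) (hK : 1 ≤ (K : ℝ))
    (hKs : K * s ≤ 1 / 2000) (hρ0 : 0 ≤ ρ) (hρ : ρ ≤ 1 / 10 ^ 7) :
    ((4 * ρ + (K + 1) * (2 * s ^ 2)) / (1 / 400) ^ 2) ^ K ≤ (n ^ 20)⁻¹ := by
  have hKs2 : K * s ^ 2 ≤ (1 / 2000) ^ 2 := by
    refine le_trans ?_ (pow_le_pow_left₀ (by positivity) hKs 2)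
    rw [mul_pow]
    gcongr
    exact le_self_pow₀ hK two_ne_zero
  have hs2 : s ^ 2 ≤ K * s ^ 2 := le_mul_of_one_le_left (by positivity) hK
  have hexp : 1 / 3 ≤ Real.exp (-1) := by
    rw [Real.exp_neg, one_div]
    exact inv_anti₀ (Real.exp_pos _) (by linarith [Real.exp_one_lt_d9])
  calc ((4 * ρ + (K + 1) * (2 * s ^ 2)) / (1 / 400) ^ 2) ^ K ≤ Real.exp (-1) ^ K := by
        gcongr
        rw [div_le_iff₀ (by norm_num)]
        linarith
    _ = Real.exp (-K) := by rw [← Real.exp_nat_mul, mul_neg_one]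
    _ ≤ (n ^ 20)⁻¹ := exp_neg_le_inv_pow hn (by exact_mod_cast hlog)

/-- `N + 1` is the price of passing from the Bernoulli to the uniform support. -/
theorem succ_mul_failureBound_le (hn : 1 ≤ n) (hN0 : 0 ≤ N) (hN : N ≤ n ^ 2) (hK : 1 ≤ (K : ℝ))
    (hlog : 20 * Real.log n ≤ K) (hKn : K ≤ 21 * n) (hs : 0 < s) (hKs : K * s ≤ 1 / 2000)
    (hρ0 : 0 ≤ ρ) (hρ : ρ ≤ 1 / 10 ^ 7) :
    (N + 1) * failureBound K n N ρ (1 / (2 * K)) (2 * s ^ 2) ≤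
      136 * Nat.factorial 20 * (n ^ 10)⁻¹ := by
  have hn0 : 0 < n := by linarith
  have hKs2 : (K * s) ^ 2 ≤ (1 / 2000) ^ 2 := by gcongr
  have hsK : K * s ^ 2 ≤ (K * s) ^ 2 := by
    rw [mul_pow]
    gcongr
    exact le_self_pow₀ hK two_ne_zero
  have hexp {x : ℝ} (hx : K ≤ x) : Real.exp (-x) ≤ (n ^ 20)⁻¹ :=
    exp_neg_le_inv_pow hn0 (by exact_mod_cast hlog.trans hx)
  have hbound : failureBound K n N ρ (1 / (2 * K)) (2 * s ^ 2) ≤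
      68 * Nat.factorial 20 * (n ^ 17)⁻¹ := by
    refine failureBound_le hn hN0 hN hKn (by exact_mod_cast Nat.factorial_pos 20)
      (trace_failure_le hn0 hlog hs.le hK hKs hρ0 hρ) (hexp ?_) (hexp ?_)
      (exp_neg_le_factorial_mul_inv_pow hn0 20)
    · rw [div_div, le_div_iff₀ (by positivity)]
      linarith
    · rw [le_div_iff₀ (by positivity)]
      linarith
  have hN1 : N + 1 ≤ 2 * n ^ 2 := by linarith [one_le_pow₀ hn (n := 2)]
  calc (N + 1) * failureBound K n N ρ (1 / (2 * K)) (2 * s ^ 2)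
    _ ≤ 2 * n ^ 2 * (68 * Nat.factorial 20 * (n ^ 17)⁻¹) :=
      mul_le_mul hN1 hbound (by unfold failureBound; positivity) (by positivity)
    _ = 136 * Nat.factorial 20 * (n ^ 15)⁻¹ := by field
    _ ≤ 136 * Nat.factorial 20 * (n ^ 10)⁻¹ := by
      gcongr
      norm_num

end FailureEstimates

section CertificateExistence

variable {m n : Type*} [Fintype m] [Fintype n] [DecidableEq m] [DecidableEq n]
  {G : Matrix (m × n) (m × n) ℝ} {Z : m × n → ℝ} {s : ℝ}

theorem succ_mul_measureReal_not_hasDualCertificate_le (hG : IsStarProjection G)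
    (hperp : ∀ X, specNorm (X - G *ᵥ X) ≤ specNorm X) (hGZ : G *ᵥ Z = Z) (hs : 0 < s)
    (hμ : ∀ e, G e e ≤ 2 * s ^ 2) (hcard : Fintype.card n ≤ Fintype.card m)
    (hm : 0 < Fintype.card m) (hZ : ∀ e, |Z e| ≤ s * (√(Fintype.card m))⁻¹) {K : ℕ} (hK : K ≠ 0)
    (hlog : 20 * Real.log (Fintype.card m) ≤ K) (hKm : (K : ℝ) ≤ 21 * Fintype.card m)
    (hKs : K * s ≤ 1 / 2000) {ρ : unitInterval} (hρ : ρ ≤ maxDensity) :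
    (Fintype.card m * Fintype.card n + 1) *
        ((bernoulliProduct (m × n) ρ).prod (uniformSigns (m × n))).real {x |
          ¬HasDualCertificate G Z (√(Fintype.card m))⁻¹ (s * (√(Fintype.card m))⁻¹ / 2 ^ K) x} ≤
      136 * Nat.factorial 20 * ((Fintype.card m : ℝ) ^ 10)⁻¹ := by
  have hm1 : (1 : ℝ) ≤ Fintype.card m := by exact_mod_cast hm
  have hnm : (Fintype.card n : ℝ) ≤ Fintype.card m := by exact_mod_cast hcard
  have hK1 : (1 : ℝ) ≤ K := by exact_mod_cast Nat.one_le_iff_ne_zero.mpr hK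
  have hρ7 : (ρ : ℝ) ≤ 1 / 10 ^ 7 := hρ.trans (min_le_left _ _)
  obtain ⟨p, q, hq, hpq⟩ := exists_mul_symm_pow_eq hK (ρ := ρ) (by linarith)
  have hq0 : q ≠ 0 := by
    rw [← unitInterval.pos_iff_ne_zero, ← Subtype.coe_lt_coe, hq]
    simp only [Set.Icc.coe_zero]
    positivity
  set R := √(Fintype.card m)
  have hR0 : 0 < R := Real.sqrt_pos.mpr (by linarith)
  have hratio : s * R⁻¹ / q = 2 * (K * s) * R⁻¹ := by rw [hq]; field
  refine le_trans ?_ (succ_mul_failureBound_le (N := Fintype.card m * Fintype.card n) hm1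
    (by positivity) (by nlinarith) hK1 hlog hKm hs hKs ρ.2.1 hρ7)
  rw [← hq]
  gcongr
  refine measureReal_not_hasDualCertificate_le hG hperp hGZ hμ (by positivity) hcard
    (by positivity) hZ p hq0 hK hpq hρ (by positivity) (inv_mul_cancel₀ hR0.ne').le ?_ ?_ ?_
  · rw [hratio]
    nlinarith [inv_pos.mpr hR0]
  · rw [hratio, mul_assoc, inv_mul_cancel_right₀ hR0.ne']
    linarith
  · have hs8 : s ≤ 1 / 8 := by nlinarith
    calc s * R⁻¹ / 2 ^ K ≤ s * R⁻¹ := div_le_self (by positivity) (one_le_pow₀ one_le_two)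
      _ ≤ 1 / 8 * R⁻¹ := by gcongr
      _ = R⁻¹ / 8 := by ring

theorem exists_succ_mul_measureReal_not_hasDualCertificate_le (hG : IsStarProjection G)
    (hperp : ∀ X, specNorm (X - G *ᵥ X) ≤ specNorm X) (hGZ : G *ᵥ Z = Z)
    (hcard : Fintype.card n ≤ Fintype.card m) (hm : 4 ≤ Fintype.card m)
    (hs : s = 1 / 50000 / Real.log (Fintype.card m)) (hμ : ∀ e, G e e ≤ 2 * s ^ 2)
    (hZ : ∀ e, |Z e| ≤ s * (√(Fintype.card m))⁻¹) {ρ : unitInterval} (hρ : ρ ≤ maxDensity) :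
    ∃ ε, 0 ≤ ε ∧ ε * Fintype.card m ≤ (√(Fintype.card m))⁻¹ / 8 ∧
      (Fintype.card m * Fintype.card n + 1) *
        ((bernoulliProduct (m × n) ρ).prod (uniformSigns (m × n))).real
          {x | ¬HasDualCertificate G Z (√(Fintype.card m))⁻¹ ε x} ≤
        136 * Nat.factorial 20 * ((Fintype.card m : ℝ) ^ 10)⁻¹ := by
  have hm4 : (4 : ℝ) ≤ Fintype.card m := by exact_mod_cast hm
  have hm0 : (0 : ℝ) < Fintype.card m := by linarith
  have hlog1 : 1 ≤ Real.log (Fintype.card m) := by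
    rw [Real.le_log_iff_exp_le hm0]
    linarith [Real.exp_one_lt_d9]
  have hlogm := Real.log_le_self hm0.le
  set l := Real.log (Fintype.card m)
  have hlog0 : 0 < l := by linarith
  have hs0 : 0 < s := by rw [hs]; positivity
  have hsl : l * s = 1 / 50000 := by rw [hs]; field
  have hlogK := Nat.le_ceil (20 * l)
  have hKlog := (Nat.ceil_lt_add_one (by positivity : 0 ≤ 20 * l)).le
  set K := ⌈20 * l⌉₊
  have hs8 : s ≤ 1 / 8 := by nlinarith
  have hmK : (Fintype.card m : ℝ) ≤ 2 ^ K := le_two_pow_of_two_mul_log_le hm0 (by linarith)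
  refine ⟨s * (√(Fintype.card m))⁻¹ / 2 ^ K, by positivity, ?_,
    succ_mul_measureReal_not_hasDualCertificate_le hG hperp hGZ hs0 hμ hcard (by omega) hZ
      (Nat.ceil_pos.mpr (by positivity)).ne' hlogK (by linarith) ?_ hρ⟩
  · calc s * (√(Fintype.card m))⁻¹ / 2 ^ K * Fintype.card m
      _ = s * (√(Fintype.card m))⁻¹ * (Fintype.card m / 2 ^ K) := by ring
      _ ≤ 1 / 8 * (√(Fintype.card m))⁻¹ * 1 := by
        gcongr
        exact (div_le_one (by positivity)).mpr hmK
      _ = (√(Fintype.card m))⁻¹ / 8 := by ring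
  · calc (K : ℝ) * s ≤ (21 * l) * s := by
          gcongr
          linarith
      _ ≤ 1 / 2000 := by linarith

end CertificateExistence

section HighProbability

variable {n1 n2 r m : ℕ} {U : Matrix (Fin n1) (Fin r) ℝ} {V : Matrix (Fin n2) (Fin r) ℝ}

theorem abs_flat_sparseOf {a : Fin n1 × Fin n2 → ℝ} (ha : ∀ e, 0 ≤ a e)
    (ω : SampleSpace n1 n2 m) (e : Fin n1 × Fin n2) :
    |flat (sparseOf a ω) e| =
      signVec (fun e => decide (e ∈ ω.1.1)) ω.2 e * flat (sparseOf a ω) e := by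
  by_cases he : e ∈ ω.1.1 <;> cases hs : ω.2 e <;>
    simp [flat_apply, sparseOf, signVec, boolSign, he, hs, abs_of_nonneg (ha e)]

theorem mul_div_le_sq_of_rank_le {ν s : ℝ} (hn2 : 0 < n2) (hn1 : 2 ≤ n1) (hν : 0 < ν)
    (hs : s = 1 / 50000 / Real.log n1)
    (hr : (r : ℝ) ≤ (1 / 50000) ^ 2 * n2 * ν⁻¹ * (Real.log n1 ^ 2)⁻¹) : ν * r / n2 ≤ s ^ 2 := by
  have hlog : 0 < Real.log n1 := Real.log_pos (by exact_mod_cast hn1)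
  have hn2R : (0 : ℝ) < n2 := by exact_mod_cast hn2
  calc ν * r / n2 ≤ ν * ((1 / 50000) ^ 2 * n2 * ν⁻¹ * (Real.log n1 ^ 2)⁻¹) / n2 := by gcongr
    _ = s ^ 2 := by rw [hs]; field

theorem abs_flat_mul_transpose_le {ν s : ℝ} (hs : 0 ≤ s) (hν : ν * r / n2 ≤ s ^ 2)
    (hUV : ∀ i j, |∑ k, U i k * V j k| ≤ √(ν * r / (n1 * n2))) (e : Fin n1 × Fin n2) :
    |flat (U * Vᵀ) e| ≤ s * (√n1)⁻¹ := by
  refine (hUV e.1 e.2).trans ?_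
  rw [← Real.sqrt_sq hs, ← Real.sqrt_inv, ← Real.sqrt_mul (sq_nonneg s), mul_comm (n1 : ℝ),
    ← div_div, ← div_eq_mul_inv]
  gcongr

theorem HasDualCertificate.pairDist_sparseOf_le (hn2 : 0 < n2) (hn : n2 ≤ n1) (hn1 : 4 ≤ n1)
    (hU : Uᵀ * U = 1) (hV : Vᵀ * V = 1) {σ : Fin r → ℝ} (hσ : ∀ k, 0 ≤ σ k)
    {a : Fin n1 × Fin n2 → ℝ} (ha : ∀ e, 0 ≤ a e) {ε : ℝ} (hε0 : 0 ≤ ε)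
    (hε : ε * n1 ≤ (√n1)⁻¹ / 8) {ω : SampleSpace n1 n2 m}
    (hω : HasDualCertificate (tangentProj U V) (flat (U * Vᵀ)) (√n1)⁻¹ ε
      (fun e => decide (e ∈ ω.1.1), ω.2))
    {δ : ℝ} {Z0 Lh Sh : Matrix (Fin n1) (Fin n2) ℝ} (hZ : frob Z0 ≤ δ)
    (hmin : IsStablePCPMin (U * diagonal σ * Vᵀ + sparseOf a ω + Z0) (√n1)⁻¹ δ Lh Sh) :
    pairDist Lh Sh (U * diagonal σ * Vᵀ) (sparseOf a ω) ≤ √(320 * n1 * n2 + 4) * δ := by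
  obtain ⟨hmask, W, hW⟩ := hω
  have hne : Nonempty (Fin n1 × Fin n2) := ⟨⟨0, by omega⟩, ⟨0, hn2⟩⟩
  have hnR : (n2 : ℝ) ≤ n1 := by exact_mod_cast hn
  have hsqrt : 2 ≤ √n1 := Real.le_sqrt_of_sq_le (by norm_num; exact_mod_cast hn1)
  refine hW.pairDist_le hU hV hσ hmask (by positivity) ?_ hε0 (le_trans ?_ hε)
    (abs_flat_sparseOf ha ω) hZ hmin
  · rw [one_div]
    gcongr
  · gcongr
    exact Real.sqrt_le_iff.mpr ⟨by positivity, by nlinarith⟩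

theorem unifProb_mono {α : Type*} [Fintype α] {E F : α → Prop} (h : ∀ ω, E ω → F ω) :
    unifProb E ≤ unifProb F := by
  unfold unifProb
  gcongr with ω
  exact h ω

/-- For `n1 < 4` the asserted lower bound is not positive. -/
theorem one_sub_le_unifProb_of_lt_four {α : Type*} [Fintype α] (hn1 : 0 < n1) (hn : n1 < 4)
    (E : α → Prop) : 1 - 136 * Nat.factorial 20 * ((n1 : ℝ) ^ 10)⁻¹ ≤ unifProb E := by
  have hn4 : (n1 : ℝ) ≤ 4 := by exact_mod_cast hn.le
  have hn0 : (0 : ℝ) < n1 := by exact_mod_cast hn1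
  refine le_trans ?_ (div_nonneg (Nat.cast_nonneg _) (Nat.cast_nonneg _))
  rw [sub_nonpos, ← div_eq_mul_inv, one_le_div (by positivity)]
  calc (n1 : ℝ) ^ 10 ≤ 4 ^ 10 := by gcongr
    _ ≤ 136 * (Nat.factorial 20 : ℝ) := by norm_num [Nat.factorial]

theorem exists_one_sub_le_unifProb_hasDualCertificate {ν : ℝ} (hn2 : 0 < n2) (hn : n2 ≤ n1)
    (hn1 : 4 ≤ n1) (hν : 0 < ν) (hU : Uᵀ * U = 1) (hV : Vᵀ * V = 1)
    (hUν : ∀ i, ∑ k, U i k ^ 2 ≤ ν * r / n1) (hVν : ∀ j, ∑ k, V j k ^ 2 ≤ ν * r / n2)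
    (hUV : ∀ i j, |∑ k, U i k * V j k| ≤ √(ν * r / (n1 * n2)))
    (hr : (r : ℝ) ≤ (1 / 50000) ^ 2 * n2 * ν⁻¹ * (Real.log n1 ^ 2)⁻¹)
    (hm : (m : ℝ) ≤ maxDensity * n1 * n2) :
    ∃ ε, 0 ≤ ε ∧ ε * n1 ≤ (√n1)⁻¹ / 8 ∧ 1 - 136 * Nat.factorial 20 * ((n1 : ℝ) ^ 10)⁻¹ ≤
      unifProb fun ω : SampleSpace n1 n2 m => HasDualCertificate (tangentProj U V) (flat (U * Vᵀ))
        (√n1)⁻¹ ε (fun e => decide (e ∈ ω.1.1), ω.2) := by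
  obtain ⟨s, hs⟩ : ∃ s, s = 1 / 50000 / Real.log n1 := ⟨_, rfl⟩
  have hs0 : 0 ≤ s := by rw [hs]; positivity
  have hnR : (n2 : ℝ) ≤ n1 := by exact_mod_cast hn
  have hn2R : (0 : ℝ) < n2 := by exact_mod_cast hn2
  have hN : (0 : ℝ) < n1 * n2 := by positivity
  have hνr := mul_div_le_sq_of_rank_le hn2 (by omega) hν hs hr
  have hdensity : m / (n1 * n2 : ℝ) ≤ maxDensity := by rwa [div_le_iff₀ hN, ← mul_assoc]
  have hdensity1 : m / (n1 * n2 : ℝ) < 1 :=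
    (hdensity.trans (min_le_left _ _)).trans_lt (by norm_num)
  have hmlt : m < n1 * n2 := by exact_mod_cast (div_lt_one hN).mp hdensity1
  have hcoherence := tangentProj_apply_self_le (U := U) (V := V) (μ := s ^ 2)
    (fun i => (hUν i).trans (le_trans (by gcongr) hνr)) (fun j => (hVν j).trans hνr)
  obtain ⟨ε, hε0, hε, hfail⟩ := exists_succ_mul_measureReal_not_hasDualCertificate_le
    (isStarProjection_tangentProj hU hV) (specNorm_sub_tangentProj_mulVec_le hU hV)
    (tangentProj_mulVec_factor hU) (by simpa using hn) (by simpa using hn1)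
    (by simpa using hs) hcoherence (by simpa using abs_flat_mul_transpose_le hs0 hνr hUV)
    (ρ := ⟨m / (n1 * n2), by positivity, hdensity1.le⟩) hdensity
  simp only [Fintype.card_fin] at hε hfail
  refine ⟨ε, hε0, hε, (sub_le_sub_left hfail 1).trans ?_⟩
  exact one_sub_mul_measureReal_bernoulli_le_unifProb hmlt (mul_div_cancel₀ _ hN.ne') _

end HighProbability

/-- StablePCP_c(δ) with λ = 1/√n1 recovers (L0, S0) with error
√(320·n1·n2 + 4)·δ for every δ ≥ 0 and every noise Z0 with ‖Z0‖_F ≤ δ,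
with probability ≥ 1 − c′·n1⁻¹⁰ over the random support and signs. -/
theorem stablePCP_recovery :
    ∃ ρr' ρs' c' : ℝ, 0 < ρr' ∧ 0 < ρs' ∧ 0 < c' ∧
      ∀ (n1 n2 r m : ℕ) (ν : ℝ), 0 < n2 → n2 ≤ n1 → 0 < ν →
        ∀ (U : Matrix (Fin n1) (Fin r) ℝ) (V : Matrix (Fin n2) (Fin r) ℝ)
          (σ : Fin r → ℝ) (a : Fin n1 × Fin n2 → ℝ),
          Uᵀ * U = 1 → Vᵀ * V = 1 → (∀ k, 0 < σ k) → (∀ p, 0 < a p) →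
          (∀ i : Fin n1, (∑ k, U i k ^ 2) ≤ ν * r / n1) →
          (∀ j : Fin n2, (∑ k, V j k ^ 2) ≤ ν * r / n2) →
          (∀ i j, |∑ k, U i k * V j k| ≤ Real.sqrt (ν * r / (n1 * n2))) →
          (r : ℝ) ≤ ρr' * n2 * ν⁻¹ * ((Real.log n1) ^ 2)⁻¹ →
          (m : ℝ) ≤ ρs' * n1 * n2 →
          1 - c' * ((n1 : ℝ) ^ 10)⁻¹ ≤
            unifProb (fun ω : SampleSpace n1 n2 m =>
              ∀ (δ : ℝ) (Z0 : Matrix (Fin n1) (Fin n2) ℝ), 0 ≤ δ → frob Z0 ≤ δ →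
                ∀ Lh Sh : Matrix (Fin n1) (Fin n2) ℝ,
                  IsStablePCPMin (U * Matrix.diagonal σ * Vᵀ + sparseOf a ω + Z0)
                      (Real.sqrt n1)⁻¹ δ Lh Sh →
                    pairDist Lh Sh (U * Matrix.diagonal σ * Vᵀ) (sparseOf a ω) ≤
                      Real.sqrt (320 * (n1 : ℝ) * n2 + 4) * δ) := by
  refine ⟨(1 / 50000) ^ 2, maxDensity, 136 * Nat.factorial 20, by positivity, maxDensity_pos,
    by positivity, ?_⟩
  intro n1 n2 r m ν hn2 hn hν U V σ a hU hV hσ ha hUν hVν hUV hr hm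
  rcases lt_or_ge n1 4 with hsmall | hlarge
  · exact one_sub_le_unifProb_of_lt_four (hn2.trans_le hn) hsmall _
  obtain ⟨ε, hε0, hε, hprob⟩ := exists_one_sub_le_unifProb_hasDualCertificate hn2 hn hlarge hν
    hU hV hUν hVν hUV hr hm
  refine hprob.trans (unifProb_mono fun ω hω δ Z0 _ hZ Lh Sh hmin => ?_)
  exact hω.pairDist_sparseOf_le hn2 hn hlarge hU hV (fun k => (hσ k).le) (fun e => (ha e).le) hε0
    hε hZ hmin
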